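/- Let d ≥ 1 and let u : [0,∞) × ℝ^d → ℝ^d be smooth, ℤ^d-periodic in x, bounded on [0,T] × ℝ^d for every T > 0, and divergence-free in x. Suppose u is relaxation enhancing in the following sense: there is a function τ : (0,∞) → (0,∞) with ν·τ(ν) → 0 as ν → 0⁺ such that for every ν > 0, every s ≥ 0, and every smooth, ℤ^d-periodic-in-x, mean-zero solution θ of ∂_t θ − νΔθ + u·∇θ = 0 on [s,∞) × ℝ^d, one has ‖θ(s+τ(ν),·)‖_{L²} ≤ (1/2)‖θ(s,·)‖_{L²}. Then there exists a smooth, strictly increasing bijection σ : [0,1) → [0,∞) such that for every ν > 0, every s ∈ [0,1), and every smooth, ℤ^d-periodic-in-x, mean-zero solution θ of ∂_t θ − νΔθ + u_σ·∇θ = 0 on [s,1) × ℝ^d, one has ‖θ(t,·)‖_{L²} → 0 as t → 1⁻. -/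

import Mathlib

open Real MeasureTheory Filter

/-- Spatial partial derivative in the `i`-th coordinate direction. -/
noncomputable def pd (d : ℕ) (i : Fin d) (f : (Fin d → ℝ) → ℝ) (x : Fin d → ℝ) : ℝ :=
  fderiv ℝ f x (Pi.single i 1)

/-- Spatial Laplacian: sum of second partial derivatives. -/
noncomputable def lap (d : ℕ) (f : (Fin d → ℝ) → ℝ) (x : Fin d → ℝ) : ℝ :=
  ∑ i, pd d i (fun y => pd d i f y) x

/-- The `L²` norm on the unit cell `[0,1]^d` of a `ℤ^d`-periodic function. -/
noncomputable def L2norm (d : ℕ) (f : (Fin d → ℝ) → ℝ) : ℝ :=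
  Real.sqrt (∫ x in Set.Icc (0 : Fin d → ℝ) 1, (f x) ^ 2)

/-- `ℤ^d`-periodicity. -/
def PeriodicIn (d : ℕ) (f : (Fin d → ℝ) → ℝ) : Prop :=
  ∀ x : Fin d → ℝ, ∀ k : Fin d → ℤ, f (x + fun i => (k i : ℝ)) = f x


section part1
open Real MeasureTheory Filter
open scoped ContDiff Topology

/-! ### Calculus on slabs `I × ℝ^d` -/

section slabcalc
variable {d : ℕ} {V : Type*} [NormedAddCommGroup V] [NormedSpace ℝ V]

theorem fin_sum_single (v : Fin d → ℝ) : ∑ i, v i • (Pi.single i (1:ℝ) : Fin d → ℝ) = v := by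
  ext j
  simp [Finset.sum_apply, Pi.single_apply]

/-- time slice derivative as a full derivative -/
theorem slab_time {I : Set ℝ} {F : ℝ → (Fin d → ℝ) → V} {n : WithTop ℕ∞} (hn : n ≠ 0)
    (hF : ContDiffOn ℝ n (fun p : ℝ × (Fin d → ℝ) => F p.1 p.2) (I ×ˢ Set.univ))
    {t : ℝ} (ht : t ∈ I) (x : Fin d → ℝ) :
    HasDerivWithinAt (fun r => F r x)
      (fderivWithin ℝ (fun p : ℝ × (Fin d → ℝ) => F p.1 p.2) (I ×ˢ Set.univ) (t, x) (1, 0)) I t := by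
  have h1 : HasFDerivWithinAt (fun p : ℝ × (Fin d → ℝ) => F p.1 p.2) _ (I ×ˢ Set.univ) (t, x) :=
    ((hF (t, x) ⟨ht, trivial⟩).differentiableWithinAt hn).hasFDerivWithinAt
  have h2 : HasDerivWithinAt (fun r : ℝ => (r, x)) ((1:ℝ), (0 : Fin d → ℝ)) I t :=
    (hasDerivWithinAt_id t I).prodMk (hasDerivWithinAt_const t I x)
  exact HasFDerivWithinAt.comp_hasDerivWithinAt (t := I ×ˢ Set.univ) t h1 h2
    (fun r hr => ⟨hr, trivial⟩)

theorem slab_space {I : Set ℝ} {F : ℝ → (Fin d → ℝ) → V} {n : WithTop ℕ∞}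
    (hF : ContDiffOn ℝ n (fun p : ℝ × (Fin d → ℝ) => F p.1 p.2) (I ×ˢ Set.univ))
    {t : ℝ} (ht : t ∈ I) : ContDiff ℝ n (F t) := by
  rw [← contDiffOn_univ]
  have h2 : ContDiffOn ℝ n (fun x : Fin d → ℝ => (t, x)) Set.univ := by fun_prop
  exact hF.comp h2 (fun x _ => ⟨ht, trivial⟩)

theorem slab_space_fderiv {I : Set ℝ} {F : ℝ → (Fin d → ℝ) → V} {n : WithTop ℕ∞} (hn : n ≠ 0)
    (hF : ContDiffOn ℝ n (fun p : ℝ × (Fin d → ℝ) => F p.1 p.2) (I ×ˢ Set.univ))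
    {t : ℝ} (ht : t ∈ I) (x v : Fin d → ℝ) :
    fderiv ℝ (F t) x v =
      fderivWithin ℝ (fun p : ℝ × (Fin d → ℝ) => F p.1 p.2) (I ×ˢ Set.univ) (t, x) (0, v) := by
  have h1 : HasFDerivWithinAt (fun p : ℝ × (Fin d → ℝ) => F p.1 p.2) _ (I ×ˢ Set.univ) (t, x) :=
    ((hF (t, x) ⟨ht, trivial⟩).differentiableWithinAt hn).hasFDerivWithinAt
  have h2 : HasFDerivWithinAt (fun x : Fin d → ℝ => (t, x))
      (ContinuousLinearMap.inr ℝ ℝ (Fin d → ℝ)) Set.univ x :=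
    (hasFDerivAt_prodMk_right t x).hasFDerivWithinAt
  have h3 := h1.comp x h2 (fun y _ => ⟨ht, trivial⟩)
  rw [hasFDerivWithinAt_univ] at h3
  have h4 : fderiv ℝ (F t) x = _ := h3.fderiv
  rw [h4]; simp

theorem slab_uniqueDiff {I : Set ℝ} (hu : UniqueDiffOn ℝ I) :
    UniqueDiffOn ℝ (I ×ˢ (Set.univ : Set (Fin d → ℝ))) := hu.prod uniqueDiffOn_univ

/-- smoothness of the time derivative -/
theorem slab_dt {I : Set ℝ} (hu : UniqueDiffOn ℝ I) {F : ℝ → (Fin d → ℝ) → V}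
    (hF : ContDiffOn ℝ (⊤ : ℕ∞) (fun p : ℝ × (Fin d → ℝ) => F p.1 p.2) (I ×ˢ Set.univ)) :
    ContDiffOn ℝ (⊤ : ℕ∞) (fun p : ℝ × (Fin d → ℝ) => derivWithin (fun r => F r p.2) I p.1)
      (I ×ˢ Set.univ) := by
  have h := ((hF.fderivWithin (slab_uniqueDiff hu) (m := (⊤ : ℕ∞)) (by simp)).clm_apply
    (contDiffOn_const (c := ((1:ℝ), (0 : Fin d → ℝ)))))
  refine h.congr ?_
  rintro ⟨t, x⟩ ⟨ht, -⟩
  exact (slab_time (by simp) hF ht x).derivWithin (hu t ht)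

theorem slab_dx {I : Set ℝ} (hu : UniqueDiffOn ℝ I) {F : ℝ → (Fin d → ℝ) → V}
    (hF : ContDiffOn ℝ (⊤ : ℕ∞) (fun p : ℝ × (Fin d → ℝ) => F p.1 p.2) (I ×ˢ Set.univ))
    (v : Fin d → ℝ) :
    ContDiffOn ℝ (⊤ : ℕ∞) (fun p : ℝ × (Fin d → ℝ) => fderiv ℝ (F p.1) p.2 v)
      (I ×ˢ Set.univ) := by
  have h := ((hF.fderivWithin (slab_uniqueDiff hu) (m := (⊤ : ℕ∞)) (by simp)).clm_apply
    (contDiffOn_const (c := ((0:ℝ), v))))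
  refine h.congr ?_
  rintro ⟨t, x⟩ ⟨ht, -⟩
  exact (slab_space_fderiv (by simp) hF ht x v)

theorem slab_pd {I : Set ℝ} (hu : UniqueDiffOn ℝ I) {F : ℝ → (Fin d → ℝ) → ℝ}
    (hF : ContDiffOn ℝ (⊤ : ℕ∞) (fun p : ℝ × (Fin d → ℝ) => F p.1 p.2) (I ×ˢ Set.univ))
    (i : Fin d) :
    ContDiffOn ℝ (⊤ : ℕ∞) (fun p : ℝ × (Fin d → ℝ) => pd d i (F p.1) p.2)
      (I ×ˢ Set.univ) := slab_dx hu hF _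

/-- Differentiation under the integral sign over the unit cell, within a closed convex time set. -/
theorem slab_integral_deriv {I : Set ℝ} (hI : Convex ℝ I) (hc : IsClosed I)
    (hu : UniqueDiffOn ℝ I) {F : ℝ → (Fin d → ℝ) → V}
    (hF : ContDiffOn ℝ 1 (fun p : ℝ × (Fin d → ℝ) => F p.1 p.2) (I ×ˢ Set.univ))
    {t : ℝ} (ht : t ∈ I) :
    HasDerivWithinAt (fun r => ∫ x in Set.Icc (0 : Fin d → ℝ) 1, F r x)
      (∫ x in Set.Icc (0 : Fin d → ℝ) 1, derivWithin (fun r => F r x) I t) I t := by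
  set S : Set (ℝ × (Fin d → ℝ)) := I ×ˢ Set.univ
  set D : ℝ × (Fin d → ℝ) → V := fun p =>
    fderivWithin ℝ (fun p : ℝ × (Fin d → ℝ) => F p.1 p.2) S p (1, 0) with hD
  have hDc : ContinuousOn D S :=
    (hF.continuousOn_fderivWithin (slab_uniqueDiff hu) le_rfl).clm_apply continuousOn_const
  have hcomp : IsCompact ((I ∩ Metric.closedBall t 1) ×ˢ Set.Icc (0 : Fin d → ℝ) 1) :=
    ((isCompact_closedBall t 1).inter_left hc).prod isCompact_Icc
  obtain ⟨C, hC⟩ := hcomp.exists_bound_of_continuousOn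
    (hDc.mono (fun p hp => ⟨hp.1.1, trivial⟩))
  have hder : ∀ x, ∀ r ∈ I, HasDerivWithinAt (fun r => F r x) (D (r, x)) I r :=
    fun x r hr => slab_time one_ne_zero hF hr x
  have hintg : ∀ r ∈ I, IntegrableOn (F r) (Set.Icc (0 : Fin d → ℝ) 1) := fun r hr =>
    (slab_space hF hr).continuous.continuousOn.integrableOn_compact isCompact_Icc
  rw [hasDerivWithinAt_iff_tendsto_slope]
  have key : Tendsto (fun r => ∫ x in Set.Icc (0 : Fin d → ℝ) 1, slope (fun r => F r x) t r)
      (𝓝[I \ {t}] t)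
      (𝓝 (∫ x in Set.Icc (0 : Fin d → ℝ) 1, derivWithin (fun r => F r x) I t)) := by
    have hnb : ∀ᶠ r in 𝓝[I \ {t}] t, r ∈ I ∧ r ∈ Metric.closedBall t 1 ∧ r ≠ t := by
      have h1 : ∀ᶠ r in 𝓝[I \ {t}] t, r ∈ I \ {t} := self_mem_nhdsWithin
      have h2 : ∀ᶠ r in 𝓝[I \ {t}] t, r ∈ Metric.closedBall t 1 :=
        mem_nhdsWithin_of_mem_nhds (Metric.closedBall_mem_nhds t one_pos)
      filter_upwards [h1, h2] with r hr1 hr2 using ⟨hr1.1, hr2, hr1.2⟩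
    apply tendsto_integral_filter_of_dominated_convergence (fun _ => C)
    · filter_upwards [hnb] with r hr
      simp only [slope_def_module]
      exact (((hintg r hr.1).sub (hintg t ht)).smul _).aestronglyMeasurable
    · filter_upwards [hnb] with r hr
      refine (ae_restrict_iff' measurableSet_Icc).2 (Eventually.of_forall fun x hx => ?_)
      have hconv : Convex ℝ (I ∩ Metric.closedBall t 1) := hI.inter (convex_closedBall t 1)
      have := hconv.norm_image_sub_le_of_norm_hasDerivWithin_le
        (f := fun r => F r x) (f' := fun r => D (r, x)) (C := C)
        (fun y hy => (hder x y hy.1).mono Set.inter_subset_left)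
        (fun y hy => hC (y, x) ⟨hy, hx⟩)
        ⟨ht, Metric.mem_closedBall_self zero_le_one⟩ ⟨hr.1, hr.2.1⟩
      have hpos : 0 < ‖r - t‖ := norm_pos_iff.2 (sub_ne_zero.2 hr.2.2)
      rw [slope_def_module, norm_smul, norm_inv]
      rw [inv_mul_le_iff₀ hpos]; linarith
    · exact (continuous_const (y := C)).continuousOn.integrableOn_compact isCompact_Icc
    · refine Eventually.of_forall fun x => ?_
      have := hasDerivWithinAt_iff_tendsto_slope.1 (hder x t ht)
      rwa [← (hder x t ht).derivWithin (hu t ht)] at this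
  refine key.congr' ?_
  have h1 : ∀ᶠ r in 𝓝[I \ {t}] t, r ∈ I \ {t} := self_mem_nhdsWithin
  filter_upwards [h1] with r hr
  simp only [slope_def_module]
  rw [integral_smul, integral_sub (hintg r hr.1) (hintg t ht)]

theorem torus_lift {X : Type*} {f : (Fin d → ℝ) → X}
    (hper : ∀ x : Fin d → ℝ, ∀ k : Fin d → ℤ, f (x + fun i => (k i : ℝ)) = f x) :
    ∃ g : UnitAddTorus (Fin d) → X, ∀ x : Fin d → ℝ, g (fun i => (x i : UnitAddCircle)) = f x := by
  refine ⟨fun y => f (fun i => (AddCircle.equivIoc 1 0 (y i)).1), fun x => ?_⟩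
  have : ∀ i, ∃ k : ℤ, (AddCircle.equivIoc 1 0 (x i : UnitAddCircle)).1 = x i + k := by
    intro i
    have h' : (((AddCircle.equivIoc (1:ℝ) 0 (x i : UnitAddCircle)).1 : ℝ) : AddCircle (1:ℝ))
      = (x i : AddCircle (1:ℝ)) := AddCircle.coe_equivIoc
    rw [← sub_eq_zero, ← AddCircle.coe_sub, AddCircle.coe_eq_zero_iff] at h'
    obtain ⟨n, hn⟩ := h'
    refine ⟨n, ?_⟩
    simp at hn
    linarith
  choose k hk using this
  have h2 : (fun i => (AddCircle.equivIoc 1 0 (x i : UnitAddCircle)).1)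
      = x + fun i => (k i : ℝ) := by
    ext i; exact hk i
  simp only [h2]
  exact hper x k

/-- translation invariance of the integral over the unit cell -/
theorem cell_integral_translate {f : (Fin d → ℝ) → V}
    (hper : ∀ x : Fin d → ℝ, ∀ k : Fin d → ℤ, f (x + fun i => (k i : ℝ)) = f x)
    (a : Fin d → ℝ) :
    ∫ x in Set.Icc (0 : Fin d → ℝ) 1, f (x + a) = ∫ x in Set.Icc (0 : Fin d → ℝ) 1, f x := by
  have hset : ∀ a : Fin d → ℝ, {x : Fin d → ℝ | ∀ i, x i ∈ Set.Ioc (a i) (a i + 1)}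
      =ᵐ[volume] Set.Icc a (a + 1) := by
    intro a
    have := Measure.univ_pi_Ioc_ae_eq_Icc (μ := fun _ : Fin d => (volume : Measure ℝ))
      (f := a) (g := a + 1)
    have h2 : {x : Fin d → ℝ | ∀ i, x i ∈ Set.Ioc (a i) (a i + 1)} =
        Set.univ.pi fun i => Set.Ioc (a i) ((a + 1) i) := by
      ext x; simp
    rw [h2]; exact this
  obtain ⟨g, hg⟩ := torus_lift hper
  have e := ((UnitAddTorus.integral_preimage g a).symm.trans (UnitAddTorus.integral_preimage g 0))
  simp only [hg] at e
  rw [setIntegral_congr_set (hset a), setIntegral_congr_set (hset 0), zero_add] at e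
  rw [← e]
  have := (measurePreserving_add_right (volume : Measure (Fin d → ℝ)) a).setIntegral_preimage_emb
    (measurableEmbedding_addRight a) f (Set.Icc a (a + 1))
  rw [← this]
  congr 2
  ext x
  simp [Set.mem_Icc, Pi.le_def]

/-- The integral of a directional derivative of a periodic `C¹` function vanishes. -/
theorem cell_integral_fderiv {f : (Fin d → ℝ) → V} (hf : ContDiff ℝ 1 f)
    (hper : ∀ x : Fin d → ℝ, ∀ k : Fin d → ℤ, f (x + fun i => (k i : ℝ)) = f x)
    (v : Fin d → ℝ) :
    ∫ x in Set.Icc (0 : Fin d → ℝ) 1, fderiv ℝ f x v = 0 := by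
  have hF : ContDiffOn ℝ 1 (fun p : ℝ × (Fin d → ℝ) => f (p.2 + p.1 • v))
      (Set.univ ×ˢ Set.univ) := by
    apply ContDiff.contDiffOn
    exact hf.comp (by fun_prop)
  have h := slab_integral_deriv (F := fun r x => f (x + r • v)) convex_univ isClosed_univ
    uniqueDiffOn_univ hF (t := 0) trivial
  have h1 : (fun r : ℝ => ∫ x in Set.Icc (0 : Fin d → ℝ) 1, f (x + r • v)) =
    fun _ => ∫ x in Set.Icc (0 : Fin d → ℝ) 1, f x := by
    ext r; exact cell_integral_translate hper _
  rw [h1] at h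
  have h2 := (hasDerivWithinAt_const (0:ℝ) Set.univ
    (∫ x in Set.Icc (0 : Fin d → ℝ) 1, f x)).derivWithin (uniqueDiffOn_univ _ trivial)
  rw [h.derivWithin (uniqueDiffOn_univ _ trivial)] at h2
  rw [← h2]
  congr 1
  ext x
  rw [derivWithin_univ]
  have h3 : HasDerivAt (fun r : ℝ => x + r • v) v 0 := by
    simpa using ((hasDerivAt_id (0:ℝ)).smul_const v).const_add x
  have h4 : HasFDerivAt f (fderiv ℝ f x) (x + (0:ℝ) • v) := by
    simpa using (hf.differentiable one_ne_zero x).hasFDerivAt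
  exact (h4.comp_hasDerivAt (0:ℝ) h3).deriv.symm

end slabcalc
end part1

section part2
open Real MeasureTheory Filter
open scoped ContDiff Topology

section energy
variable {d : ℕ}

theorem two_le_infty : (2 : WithTop ℕ∞) ≤ ((⊤ : ℕ∞) : WithTop ℕ∞) := by
  have : ((2 : ℕ∞) : WithTop ℕ∞) ≤ ((⊤ : ℕ∞) : WithTop ℕ∞) := WithTop.coe_le_coe.2 le_top
  exact this

theorem PeriodicIn.pd {f : (Fin d → ℝ) → ℝ} (hf : PeriodicIn d f) (i : Fin d) :
    PeriodicIn d (pd d i f) := by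
  intro x k
  unfold _root_.pd
  rw [← fderiv_comp_add_right]
  congr 2
  ext y; exact hf y k

theorem PeriodicIn.mul {f g : (Fin d → ℝ) → ℝ} (hf : PeriodicIn d f) (hg : PeriodicIn d g) :
    PeriodicIn d (fun x => f x * g x) := by
  intro x k; simp only [hf x k, hg x k]

theorem pd_mul {f g : (Fin d → ℝ) → ℝ} (hf : Differentiable ℝ f) (hg : Differentiable ℝ g)
    (i : Fin d) (x : Fin d → ℝ) :
    pd d i (fun y => f y * g y) x = pd d i f x * g x + f x * pd d i g x := by
  unfold pd
  rw [fderiv_fun_mul (hf x) (hg x)]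
  simp; ring

theorem cell_integral_pd {f : (Fin d → ℝ) → ℝ} (hf : ContDiff ℝ 1 f) (hper : PeriodicIn d f)
    (i : Fin d) : ∫ x in Set.Icc (0 : Fin d → ℝ) 1, pd d i f x = 0 :=
  cell_integral_fderiv hf hper _

theorem ContDiff.pd_one {f : (Fin d → ℝ) → ℝ} (hf : ContDiff ℝ 2 f) (i : Fin d) :
    ContDiff ℝ 1 (pd d i f) :=
  (hf.fderiv_right (m := 1) (by norm_num)).clm_apply contDiff_const

theorem ContDiff.pd_cont {f : (Fin d → ℝ) → ℝ} (hf : ContDiff ℝ 1 f) (i : Fin d) :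
    Continuous (pd d i f) :=
  (hf.continuous_fderiv one_ne_zero).clm_apply continuous_const

theorem cell_integrable {f : (Fin d → ℝ) → ℝ} (hf : Continuous f) :
    IntegrableOn f (Set.Icc (0 : Fin d → ℝ) 1) :=
  hf.continuousOn.integrableOn_compact isCompact_Icc

/-- integral of `f (κ Δ f - v·∇f)` is nonpositive -/
theorem cell_energy {f : (Fin d → ℝ) → ℝ} (hf : ContDiff ℝ 2 f) (hper : PeriodicIn d f)
    {κ : ℝ} (hκ : 0 ≤ κ) (v : (Fin d → ℝ) → (Fin d → ℝ))
    (hv : ∀ i, ContDiff ℝ 1 (fun x => v x i)) (hvper : ∀ i, PeriodicIn d (fun x => v x i))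
    (hdiv : ∀ x, ∑ i, pd d i (fun y => v y i) x = 0) :
    ∫ x in Set.Icc (0 : Fin d → ℝ) 1, 2 * f x * (κ * lap d f x - ∑ i, v x i * pd d i f x) ≤ 0 := by
  have hf1 : ContDiff ℝ 1 f := hf.of_le (by norm_num)
  have hfd : Differentiable ℝ f := hf1.differentiable one_ne_zero
  have hpd : ∀ i, ContDiff ℝ 1 (pd d i f) := fun i => hf.pd_one i
  have hpoint : ∀ x, 2 * f x * (κ * lap d f x - ∑ i, v x i * pd d i f x) =
      ∑ i, (2 * κ * pd d i (fun y => f y * pd d i f y) x - 2 * κ * (pd d i f x) ^ 2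
        - pd d i (fun y => v y i * (f y * f y)) x) := by
    intro x
    have e1 : ∀ i, 2 * κ * pd d i (fun y => f y * pd d i f y) x - 2 * κ * (pd d i f x) ^ 2
        - pd d i (fun y => v y i * (f y * f y)) x =
        2 * f x * (κ * pd d i (fun y => pd d i f y) x - v x i * pd d i f x)
          - (pd d i (fun y => v y i) x) * (f x) ^ 2 := by
      intro i
      rw [pd_mul hfd ((hpd i).differentiable one_ne_zero),
        pd_mul ((hv i).differentiable one_ne_zero) (g := fun y => f y * f y) (hfd.mul hfd) i x,
        pd_mul hfd hfd i x]
      ring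
    simp only [e1]
    rw [Finset.sum_sub_distrib, ← Finset.sum_mul, hdiv x, ← Finset.mul_sum, Finset.sum_sub_distrib,
      ← Finset.mul_sum]
    simp [lap]
  simp only [hpoint]
  have hc1 : ∀ i, ContDiff ℝ 1 (fun y => f y * pd d i f y) := fun i => hf1.mul (hpd i)
  have hc2 : ∀ i, ContDiff ℝ 1 (fun y => v y i * (f y * f y)) :=
    fun i => (hv i).mul (hf1.mul hf1)
  have i1 : ∀ i, IntegrableOn (fun x => 2 * κ * pd d i (fun y => f y * pd d i f y) x)
      (Set.Icc (0 : Fin d → ℝ) 1) :=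
    fun i => cell_integrable (((hc1 i).pd_cont i).const_mul _)
  have i2 : ∀ i, IntegrableOn (fun x => 2 * κ * (pd d i f x) ^ 2)
      (Set.Icc (0 : Fin d → ℝ) 1) :=
    fun i => cell_integrable (((hpd i).continuous.pow 2).const_mul _)
  have i3 : ∀ i, IntegrableOn (fun x => pd d i (fun y => v y i * (f y * f y)) x)
      (Set.Icc (0 : Fin d → ℝ) 1) :=
    fun i => cell_integrable ((hc2 i).pd_cont i)
  have i4 : ∀ i ∈ Finset.univ, IntegrableOn (fun x =>
      2 * κ * pd d i (fun y => f y * pd d i f y) x - 2 * κ * (pd d i f x) ^ 2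
        - pd d i (fun y => v y i * (f y * f y)) x) (Set.Icc (0 : Fin d → ℝ) 1) :=
    fun i _ => ((i1 i).sub (i2 i)).sub (i3 i)
  rw [integral_finsetSum _ i4]
  apply Finset.sum_nonpos
  intro i _
  have i5 : IntegrableOn (fun x =>
      2 * κ * pd d i (fun y => f y * pd d i f y) x - 2 * κ * (pd d i f x) ^ 2)
      (Set.Icc (0 : Fin d → ℝ) 1) := (i1 i).sub (i2 i)
  rw [integral_sub i5 (i3 i), integral_sub (i1 i) (i2 i),
    cell_integral_pd (hc2 i) ((hvper i).mul (hper.mul hper)) i, integral_const_mul,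
    cell_integral_pd (hc1 i) (hper.mul (hper.pd i)) i]
  have : 0 ≤ ∫ x in Set.Icc (0 : Fin d → ℝ) 1, 2 * κ * (pd d i f x) ^ 2 :=
    integral_nonneg (fun x => by positivity)
  linarith

theorem cell_mean {f : (Fin d → ℝ) → ℝ} (hf : ContDiff ℝ 2 f) (hper : PeriodicIn d f)
    {κ : ℝ} (v : (Fin d → ℝ) → (Fin d → ℝ))
    (hv : ∀ i, ContDiff ℝ 1 (fun x => v x i)) (hvper : ∀ i, PeriodicIn d (fun x => v x i))
    (hdiv : ∀ x, ∑ i, pd d i (fun y => v y i) x = 0) :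
    ∫ x in Set.Icc (0 : Fin d → ℝ) 1, (κ * lap d f x - ∑ i, v x i * pd d i f x) = 0 := by
  have hf1 : ContDiff ℝ 1 f := hf.of_le (by norm_num)
  have hfd : Differentiable ℝ f := hf1.differentiable one_ne_zero
  have hpd : ∀ i, ContDiff ℝ 1 (pd d i f) := fun i => hf.pd_one i
  have hpoint : ∀ x, (κ * lap d f x - ∑ i, v x i * pd d i f x) =
      ∑ i, (κ * pd d i (fun y => pd d i f y) x - pd d i (fun y => v y i * f y) x) := by
    intro x
    have e1 : ∀ i, κ * pd d i (fun y => pd d i f y) x - pd d i (fun y => v y i * f y) x =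
        (κ * pd d i (fun y => pd d i f y) x - v x i * pd d i f x)
          - (pd d i (fun y => v y i) x) * (f x) := by
      intro i
      rw [pd_mul ((hv i).differentiable one_ne_zero) hfd i x]
      ring
    simp only [e1]
    rw [Finset.sum_sub_distrib, ← Finset.sum_mul, hdiv x, Finset.sum_sub_distrib,
      ← Finset.mul_sum]
    simp [lap]
  simp only [hpoint]
  have hc2 : ∀ i, ContDiff ℝ 1 (fun y => v y i * f y) := fun i => (hv i).mul hf1
  have i1 : ∀ i, IntegrableOn (fun x => κ * pd d i (fun y => pd d i f y) x)
      (Set.Icc (0 : Fin d → ℝ) 1) :=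
    fun i => cell_integrable (((hpd i).pd_cont i).const_mul _)
  have i3 : ∀ i, IntegrableOn (fun x => pd d i (fun y => v y i * f y) x)
      (Set.Icc (0 : Fin d → ℝ) 1) :=
    fun i => cell_integrable ((hc2 i).pd_cont i)
  have i4 : ∀ i ∈ Finset.univ, IntegrableOn (fun x => κ * pd d i (fun y => pd d i f y) x
        - pd d i (fun y => v y i * f y) x) (Set.Icc (0 : Fin d → ℝ) 1) :=
    fun i _ => (i1 i).sub (i3 i)
  rw [integral_finsetSum _ i4]
  apply Finset.sum_eq_zero
  intro i _
  rw [integral_sub (i1 i) (i3 i),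
    cell_integral_pd (hc2 i) ((hvper i).mul hper) i, integral_const_mul,
    cell_integral_pd (hpd i) (hper.pd i) i]
  simp

/-- energy monotonicity -/
theorem energy_antitone {I : Set ℝ} (hI : Convex ℝ I) (hc : IsClosed I) (hu : UniqueDiffOn ℝ I)
    {κ : ℝ} (hκ : 0 ≤ κ) (v : ℝ → (Fin d → ℝ) → (Fin d → ℝ))
    (hv : ∀ t ∈ I, ∀ i, ContDiff ℝ 1 (fun x => v t x i))
    (hvper : ∀ t ∈ I, ∀ i, PeriodicIn d (fun x => v t x i))
    (hdiv : ∀ t ∈ I, ∀ x, ∑ i, pd d i (fun y => v t y i) x = 0)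
    {θ : ℝ → (Fin d → ℝ) → ℝ}
    (hθ : ContDiffOn ℝ (⊤ : ℕ∞) (fun p : ℝ × (Fin d → ℝ) => θ p.1 p.2) (I ×ˢ Set.univ))
    (hper : ∀ t ∈ I, PeriodicIn d (θ t))
    (heq : ∀ t ∈ I, ∀ x, derivWithin (fun r => θ r x) I t - κ * lap d (θ t) x
          + ∑ i, v t x i * pd d i (θ t) x = 0) :
    AntitoneOn (fun t => ∫ x in Set.Icc (0 : Fin d → ℝ) 1, (θ t x) ^ 2) I := by
  have h2 : ContDiffOn ℝ 1 (fun p : ℝ × (Fin d → ℝ) => (θ p.1 p.2) ^ 2) (I ×ˢ Set.univ) :=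
    (hθ.pow 2).of_le (by exact_mod_cast le_top)
  have hder := fun t ht => slab_integral_deriv (F := fun t x => (θ t x) ^ 2) hI hc hu h2 (t := t) ht
  refine antitoneOn_of_hasDerivWithinAt_nonpos hI (fun t ht => (hder t ht).continuousWithinAt)
    (fun t ht => (hder t (interior_subset ht)).mono interior_subset) ?_
  intro t ht'
  have ht := interior_subset ht'
  refine le_trans (le_of_eq ?_) (cell_energy
    ((slab_space hθ ht).of_le two_le_infty) (hper t ht) hκ (v t)
    (hv t ht) (hvper t ht) (hdiv t ht))
  congr 1
  ext x
  have h3 := ((slab_time (by simp) hθ ht x).differentiableWithinAt).hasDerivWithinAt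
  have h4 := (h3.pow 2).derivWithin (hu t ht)
  have h5 : derivWithin (fun r => θ r x ^ 2) I t = _ := h4
  rw [h5]
  have := heq t ht x
  have e : derivWithin (fun r => θ r x) I t = κ * lap d (θ t) x
     - ∑ i, v t x i * pd d i (θ t) x := by linarith
  rw [e]; simp

theorem mean_const {I : Set ℝ} (hI : Convex ℝ I) (hc : IsClosed I) (hu : UniqueDiffOn ℝ I)
    {κ : ℝ} (v : ℝ → (Fin d → ℝ) → (Fin d → ℝ))
    (hv : ∀ t ∈ I, ∀ i, ContDiff ℝ 1 (fun x => v t x i))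
    (hvper : ∀ t ∈ I, ∀ i, PeriodicIn d (fun x => v t x i))
    (hdiv : ∀ t ∈ I, ∀ x, ∑ i, pd d i (fun y => v t y i) x = 0)
    {θ : ℝ → (Fin d → ℝ) → ℝ}
    (hθ : ContDiffOn ℝ (⊤ : ℕ∞) (fun p : ℝ × (Fin d → ℝ) => θ p.1 p.2) (I ×ˢ Set.univ))
    (hper : ∀ t ∈ I, PeriodicIn d (θ t))
    (heq : ∀ t ∈ I, ∀ x, derivWithin (fun r => θ r x) I t - κ * lap d (θ t) x
          + ∑ i, v t x i * pd d i (θ t) x = 0) {s t : ℝ} (hs : s ∈ I) (ht : t ∈ I) :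
    ∫ x in Set.Icc (0 : Fin d → ℝ) 1, θ t x = ∫ x in Set.Icc (0 : Fin d → ℝ) 1, θ s x := by
  have hder := fun t ht => slab_integral_deriv (F := θ) hI hc hu
    (hθ.of_le (by exact_mod_cast le_top)) (t := t) ht
  have hz : ∀ t ∈ I, ∫ x in Set.Icc (0 : Fin d → ℝ) 1, derivWithin (fun r => θ r x) I t = 0 := by
    intro t ht
    rw [← cell_mean
      ((slab_space hθ ht).of_le two_le_infty) (hper t ht) (κ := κ) (v t)
      (hv t ht) (hvper t ht) (hdiv t ht)]
    congr 1
    ext x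
    linarith [heq t ht x]
  have := hI.norm_image_sub_le_of_norm_hasDerivWithin_le (C := 0) hder
    (fun t ht => by rw [hz t ht]; simp) hs ht
  simpa [sub_eq_zero] using this

end energy
end part2

section part3
open Real MeasureTheory Filter
open scoped ContDiff Topology

/-! ### Rapidly decaying families of Fourier coefficients -/

section families

theorem hasFDerivWithinAt_tsum_convex {ι E' V : Type*} [NormedAddCommGroup E'] [NormedSpace ℝ E']
    [NormedAddCommGroup V] [NormedSpace ℝ V] [CompleteSpace V] {S : Set E'} (hS : Convex ℝ S)
    {f : ι → E' → V} {f' : ι → E' → E' →L[ℝ] V} {u : ι → ℝ} (hu : Summable u)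
    (hf : ∀ i, ∀ x ∈ S, HasFDerivWithinAt (f i) (f' i x) S x)
    (hb : ∀ i, ∀ x ∈ S, ‖f' i x‖ ≤ u i) (hs : ∀ x ∈ S, Summable fun i => f i x)
    {x : E'} (hx : x ∈ S) :
    HasFDerivWithinAt (fun y => ∑' i, f i y) (∑' i, f' i x) S x := by
  rw [hasFDerivWithinAt_iff_tendsto]
  have hsf' : Summable fun i => f' i x := Summable.of_norm_bounded hu (fun i => hb i x hx)
  set g : ι → E' → ℝ := fun i y => ‖y - x‖⁻¹ * ‖f i y - f i x - f' i x (y - x)‖ with hg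
  have hgb : ∀ i, ∀ y ∈ S, ‖g i y‖ ≤ 2 * u i := by
    intro i y hy
    have h1 := hS.norm_image_sub_le_of_norm_hasFDerivWithin_le (hf i) (hb i) hx hy
    have h2 : ‖f' i x (y - x)‖ ≤ u i * ‖y - x‖ :=
      ((f' i x).le_opNorm _).trans (by gcongr; exact hb i x hx)
    have h3 : ‖f i y - f i x - f' i x (y - x)‖ ≤ 2 * u i * ‖y - x‖ := by
      refine (norm_sub_le _ _).trans ?_; linarith
    rw [hg]
    simp only [norm_mul, norm_inv, norm_norm]
    rcases eq_or_ne (‖y - x‖) 0 with h0 | h0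
    · rw [h0]; simp
      exact (norm_nonneg _).trans (hb i x hx)
    · rw [inv_mul_le_iff₀ (lt_of_le_of_ne (norm_nonneg _) (Ne.symm h0))]; linarith
  have key : Tendsto (fun y => ∑' i, g i y) (𝓝[S] x) (𝓝 (∑' _ : ι, (0:ℝ))) := by
    refine tendsto_tsum_of_dominated_convergence (bound := fun i => 2 * u i) (hu.mul_left 2) ?_ ?_
    · intro i
      exact (hasFDerivWithinAt_iff_tendsto.1 (hf i x hx))
    · filter_upwards [self_mem_nhdsWithin] with y hy i using hgb i y hy
  rw [tsum_zero] at key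
  refine squeeze_zero' (Eventually.of_forall fun y => by positivity) ?_ key
  filter_upwards [self_mem_nhdsWithin] with y hy
  have hsg : Summable fun i => g i y := Summable.of_norm_bounded (hu.mul_left 2)
    (fun i => hgb i y hy)
  have e : (∑' i, f i y) - (∑' i, f i x) - (∑' i, f' i x) (y - x) =
      ∑' i, (f i y - f i x - f' i x (y - x)) := by
    have h3 : Summable fun i => f' i x (y - x) :=
      hsf'.mapL (ContinuousLinearMap.apply ℝ V (y - x))
    have h4 : (∑' i, f' i x) (y - x) = ∑' i, f' i x (y - x) :=
      (ContinuousLinearMap.apply ℝ V (y - x)).map_tsum hsf'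
    rw [h4, ← (hs y hy).tsum_sub (hs x hx), ← ((hs y hy).sub (hs x hx)).tsum_sub h3]
  rw [e]
  rcases eq_or_ne (‖y - x‖) 0 with h0 | h0
  · rw [h0]; simp; exact tsum_nonneg (fun i => by positivity)
  · have hs2 : Summable fun i => ‖f i y - f i x - f' i x (y - x)‖ := by
      have := hsg.mul_left (‖y - x‖)
      refine this.congr (fun i => ?_)
      rw [hg]; field_simp
    calc ‖y - x‖⁻¹ * ‖∑' i, (f i y - f i x - f' i x (y - x))‖
        ≤ ‖y - x‖⁻¹ * ∑' i, ‖f i y - f i x - f' i x (y - x)‖ := by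
          gcongr; exact norm_tsum_le_tsum_norm hs2
      _ = ∑' i, g i y := by rw [← tsum_mul_left]

variable {ι : Type*}

theorem tsum_continuousOn_Ici {s : ℝ} {f : ι → ℝ → ℂ} (hf : ∀ i, ContinuousOn (f i) (Set.Ici s))
    (hb : ∀ T, ∃ u : ι → ℝ, Summable u ∧ ∀ t, s ≤ t → t ≤ T → ∀ i, ‖f i t‖ ≤ u i) :
    ContinuousOn (fun t => ∑' i, f i t) (Set.Ici s) := by
  intro t ht
  obtain ⟨u, hu, hbu⟩ := hb (t + 1)
  have h : ContinuousOn (fun t => ∑' i, f i t) (Set.Icc s (t + 1)) :=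
    continuousOn_tsum (fun i => (hf i).mono (fun r hr => hr.1)) hu
      (fun i r hr => hbu r hr.1 hr.2 i)
  refine (h t ⟨ht, by linarith⟩).mono_of_mem_nhdsWithin ?_
  rw [← Set.Ici_inter_Iic]
  exact inter_mem self_mem_nhdsWithin (mem_nhdsWithin_of_mem_nhds (Iic_mem_nhds (by linarith)))

theorem tsum_hasDerivWithinAt_Ici {s : ℝ} {f f' : ι → ℝ → ℂ}
    (hf : ∀ i, ∀ t, s ≤ t → HasDerivWithinAt (f i) (f' i t) (Set.Ici s) t)
    (hs : ∀ t, s ≤ t → Summable fun i => f i t)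
    (hb : ∀ T, ∃ u : ι → ℝ, Summable u ∧ ∀ t, s ≤ t → t ≤ T → ∀ i, ‖f' i t‖ ≤ u i)
    {t : ℝ} (ht : s ≤ t) :
    HasDerivWithinAt (fun t => ∑' i, f i t) (∑' i, f' i t) (Set.Ici s) t := by
  obtain ⟨u, hu, hbu⟩ := hb (t + 1)
  have h := hasFDerivWithinAt_tsum_convex (S := Set.Icc s (t + 1)) (convex_Icc _ _) (f := f)
    (f' := fun i t => (1 : ℝ →L[ℝ] ℝ).smulRight (f' i t)) hu
    (fun i x hx => ((hf i x hx.1).mono (fun r hr => hr.1)).hasFDerivWithinAt)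
    (fun i x hx => by simpa using hbu x hx.1 hx.2 i)
    (fun x hx => hs x hx.1) (x := t) ⟨ht, by linarith⟩
  have hsum : Summable fun i => f' i t := Summable.of_norm_bounded hu
    (fun i => hbu t ht (by linarith) i)
  have h2 := h.hasDerivWithinAt
  have e : (∑' i, (1 : ℝ →L[ℝ] ℝ).smulRight (f' i t)) 1 = ∑' i, f' i t := by
    have := ((ContinuousLinearMap.smulRightL ℝ ℝ ℂ (1 : ℝ →L[ℝ] ℝ))).map_tsum hsum
    have h3 : (∑' i, (1 : ℝ →L[ℝ] ℝ).smulRight (f' i t)) =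
      (1 : ℝ →L[ℝ] ℝ).smulRight (∑' i, f' i t) := this.symm
    rw [h3]; simp
  rw [e] at h2
  refine h2.mono_of_mem_nhdsWithin ?_
  rw [← Set.Ici_inter_Iic]
  exact inter_mem self_mem_nhdsWithin (mem_nhdsWithin_of_mem_nhds (Iic_mem_nhds (by linarith)))

variable {d : ℕ}

theorem exists_summable_weight (d : ℕ) :
    ∃ p : ℕ, Summable fun k : Fin d → ℤ => ((1 + ‖k‖) ^ p)⁻¹ := by
  let L : Submodule ℤ (Fin d → ℝ) := Submodule.span ℤ (Set.range (Pi.basisFun ℝ (Fin d)))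
  refine ⟨Module.finrank ℤ L + 1, ?_⟩
  have h := ZLattice.summable_norm_pow_inv L (Module.finrank ℤ L + 1) (Nat.lt_succ_self _)
  have hmem : ∀ k : Fin d → ℤ, (fun i => (k i : ℝ)) ∈ L := by
    intro k
    rw [Module.Basis.mem_span_iff_repr_mem]
    intro i
    simp
  have hinj : Function.Injective (fun k : Fin d → ℤ => (⟨fun i => (k i : ℝ), hmem k⟩ : L)) := by
    intro k l hkl
    have := congrArg Subtype.val hkl
    ext i
    have h3 : ((k i : ℤ) : ℝ) = (l i : ℤ) := congrFun this i
    exact_mod_cast h3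
  have h2 := h.comp_injective hinj
  have hn : ∀ k : Fin d → ℤ, ‖(⟨fun i => (k i : ℝ), hmem k⟩ : L)‖ = ‖k‖ := by
    intro k
    have h3 : ∀ b, ‖((k b : ℤ) : ℝ)‖₊ = ‖k b‖₊ := fun b => by
      ext; simp [Int.norm_eq_abs]
    simp [Pi.norm_def, h3]
  refine Summable.of_norm_bounded_eventually h2 ?_
  have hf : (({0} : Set (Fin d → ℤ))ᶜ) ∈ (cofinite : Filter (Fin d → ℤ)) :=
    (Set.finite_singleton _).compl_mem_cofinite
  filter_upwards [hf] with k hk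
  simp only [Function.comp_def, hn]
  have hk0 : 0 < ‖k‖ := norm_pos_iff.2 hk
  rw [norm_inv, norm_pow, Real.norm_of_nonneg (by positivity), inv_pow]
  gcongr
  linarith

/-- rapid decay, locally uniformly in time -/
def RD (s : ℝ) (c : (Fin d → ℤ) → ℝ → ℂ) : Prop :=
  ∀ N : ℕ, ∀ T : ℝ, ∃ C : ℝ, ∀ t, s ≤ t → t ≤ T → ∀ k, (1 + ‖k‖) ^ N * ‖c k t‖ ≤ C

/-- `n` times continuously differentiable families with rapid decay of the derivatives -/
def CR (s : ℝ) : ℕ → ((Fin d → ℤ) → ℝ → ℂ) → Prop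
  | 0, c => (∀ k, ContinuousOn (c k) (Set.Ici s)) ∧ RD s c
  | n + 1, c => ((∀ k, ContinuousOn (c k) (Set.Ici s)) ∧ RD s c) ∧
      ∃ c', (∀ k, ∀ t, s ≤ t → HasDerivWithinAt (c k) (c' k t) (Set.Ici s) t) ∧ CR s n c'

theorem CR.zero {s : ℝ} {n : ℕ} {c : (Fin d → ℤ) → ℝ → ℂ} (h : CR s n c) : CR s 0 c := by
  cases n with
  | zero => exact h
  | succ n => exact h.1

theorem CR.pred {s : ℝ} {n : ℕ} : ∀ {c : (Fin d → ℤ) → ℝ → ℂ}, CR s (n + 1) c → CR s n c := by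
  induction n with
  | zero => intro c h; exact h.1
  | succ n ih =>
    rintro c ⟨h, c', h1, h2⟩
    exact ⟨h, c', h1, ih h2⟩

theorem RD.sum_bound {s : ℝ} {c : (Fin d → ℤ) → ℝ → ℂ} (h : RD s c) (N : ℕ) (T : ℝ) :
    ∃ u : (Fin d → ℤ) → ℝ, Summable u ∧ (∀ k, 0 ≤ u k) ∧
      ∀ t, s ≤ t → t ≤ T → ∀ k, (1 + ‖k‖) ^ N * ‖c k t‖ ≤ u k := by
  obtain ⟨p, hp⟩ := exists_summable_weight d
  obtain ⟨C, hC⟩ := h (N + p) T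
  refine ⟨fun k => |C| * ((1 + ‖k‖) ^ p)⁻¹, hp.mul_left _, fun k => by positivity, ?_⟩
  intro t h1 h2 k
  have := (hC t h1 h2 k).trans (le_abs_self C)
  have hpos : 0 < (1 + ‖k‖) ^ p := by positivity
  rw [le_mul_inv_iff₀ hpos]
  rw [pow_add] at this
  linarith

theorem wt_le (k j : Fin d → ℤ) : 1 + ‖k‖ ≤ (1 + ‖k - j‖) * (1 + ‖j‖) := by
  have : ‖k‖ ≤ ‖k - j‖ + ‖j‖ := by simpa using norm_add_le (k - j) j
  nlinarith [norm_nonneg (k - j), norm_nonneg j]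

theorem CR.add {s : ℝ} {n : ℕ} : ∀ {a b : (Fin d → ℤ) → ℝ → ℂ}, CR s n a → CR s n b →
    CR s n (fun k t => a k t + b k t) := by
  have base : ∀ {a b : (Fin d → ℤ) → ℝ → ℂ}, CR s 0 a → CR s 0 b →
      CR s 0 (fun k t => a k t + b k t) := by
    intro a b ha hb
    refine ⟨fun k => (ha.1 k).add (hb.1 k), fun N T => ?_⟩
    obtain ⟨A, hA⟩ := ha.2 N T
    obtain ⟨B, hB⟩ := hb.2 N T
    refine ⟨A + B, fun t h1 h2 k => ?_⟩
    calc (1 + ‖k‖) ^ N * ‖a k t + b k t‖ ≤ (1 + ‖k‖) ^ N * (‖a k t‖ + ‖b k t‖) := by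
          gcongr; exact norm_add_le _ _
      _ ≤ A + B := by rw [mul_add]; exact add_le_add (hA t h1 h2 k) (hB t h1 h2 k)
  induction n with
  | zero => exact base
  | succ n ih =>
    rintro a b ⟨ha, a', ha1, ha2⟩ ⟨hb, b', hb1, hb2⟩
    exact ⟨base ha hb, fun k t => a' k t + b' k t,
      fun k t ht => (ha1 k t ht).add (hb1 k t ht), ih ha2 hb2⟩

theorem CR.mult {s : ℝ} {n : ℕ} (m : (Fin d → ℤ) → ℂ) (A : ℝ) (p : ℕ)
    (hm : ∀ k, ‖m k‖ ≤ A * (1 + ‖k‖) ^ p) :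
    ∀ {a : (Fin d → ℤ) → ℝ → ℂ}, CR s n a → CR s n (fun k t => m k * a k t) := by
  have base : ∀ {a : (Fin d → ℤ) → ℝ → ℂ}, CR s 0 a → CR s 0 (fun k t => m k * a k t) := by
    intro a ha
    refine ⟨fun k => (ha.1 k).const_mul (m k) , fun N T => ?_⟩
    obtain ⟨B, hB⟩ := ha.2 (N + p) T
    refine ⟨|A| * B, fun t h1 h2 k => ?_⟩
    calc (1 + ‖k‖) ^ N * ‖m k * a k t‖ = (1 + ‖k‖) ^ N * (‖m k‖ * ‖a k t‖) := by rw [norm_mul]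
      _ ≤ (1 + ‖k‖) ^ N * ((|A| * (1 + ‖k‖) ^ p) * ‖a k t‖) := by
          gcongr; refine (hm k).trans ?_; gcongr; exact le_abs_self A
      _ = |A| * ((1 + ‖k‖) ^ (N + p) * ‖a k t‖) := by rw [pow_add]; ring
      _ ≤ |A| * B := by gcongr; exact hB t h1 h2 k
  induction n with
  | zero => exact base
  | succ n ih =>
    rintro a ⟨ha, a', ha1, ha2⟩
    exact ⟨base ha, fun k t => m k * a' k t, fun k t ht => (ha1 k t ht).const_mul (m k), ih ha2⟩

theorem CR.zero_fun {s : ℝ} {n : ℕ} : CR s n (fun (_ : Fin d → ℤ) (_ : ℝ) => (0:ℂ)) := by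
  have base : CR s 0 (fun (_ : Fin d → ℤ) (_ : ℝ) => (0:ℂ)) :=
    ⟨fun k => continuousOn_const, fun N T => ⟨0, fun t _ _ k => by simp⟩⟩
  induction n with
  | zero => exact base
  | succ n ih => exact ⟨base, _, fun k t _ => hasDerivWithinAt_const _ _ _, ih⟩

theorem CR.sum {s : ℝ} {n : ℕ} {α : Type*} (F : Finset α) {a : α → (Fin d → ℤ) → ℝ → ℂ}
    (h : ∀ i ∈ F, CR s n (a i)) : CR s n (fun k t => ∑ i ∈ F, a i k t) := by
  classical
  induction F using Finset.induction_on with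
  | empty => simpa using CR.zero_fun
  | insert i F hi ih =>
    simp only [Finset.sum_insert hi]
    exact CR.add (h i (Finset.mem_insert_self _ _))
      (ih fun j hj => h j (Finset.mem_insert_of_mem hj))

/-- convolution -/
noncomputable def cv (a b : (Fin d → ℤ) → ℝ → ℂ) (k : Fin d → ℤ) (t : ℝ) : ℂ :=
  ∑' j, a (k - j) t * b j t

theorem cv_term_bound {s : ℝ} {a b : (Fin d → ℤ) → ℝ → ℂ} (ha : RD s a) (hb : RD s b) (N : ℕ)
    (T : ℝ) : ∃ u : (Fin d → ℤ) → ℝ, Summable u ∧ (∀ k, 0 ≤ u k) ∧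
      ∀ t, s ≤ t → t ≤ T → ∀ k j, (1 + ‖k‖) ^ N * ‖a (k - j) t * b j t‖ ≤ u j := by
  obtain ⟨A, hA⟩ := ha N T
  obtain ⟨u, hu, hu0, hub⟩ := hb.sum_bound N T
  refine ⟨fun j => |A| * u j, hu.mul_left _, fun k => mul_nonneg (abs_nonneg _) (hu0 k), ?_⟩
  intro t h1 h2 k j
  calc (1 + ‖k‖) ^ N * ‖a (k - j) t * b j t‖
      ≤ ((1 + ‖k - j‖) * (1 + ‖j‖)) ^ N * (‖a (k - j) t‖ * ‖b j t‖) := by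
        rw [norm_mul]; gcongr; exact wt_le k j
    _ = ((1 + ‖k - j‖) ^ N * ‖a (k - j) t‖) * ((1 + ‖j‖) ^ N * ‖b j t‖) := by
        rw [mul_pow]; ring
    _ ≤ |A| * u j := mul_le_mul ((hA t h1 h2 _).trans (le_abs_self A)) (hub t h1 h2 j)
        (by positivity) (abs_nonneg _)

theorem cv_summable {s : ℝ} {a b : (Fin d → ℤ) → ℝ → ℂ} (ha : RD s a) (hb : RD s b)
    {t : ℝ} (ht : s ≤ t) (k : Fin d → ℤ) : Summable fun j => a (k - j) t * b j t := by
  obtain ⟨u, hu, -, hub⟩ := cv_term_bound ha hb 0 t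
  exact Summable.of_norm_bounded hu (fun j => by simpa using hub t ht le_rfl k j)

theorem CR.cv {s : ℝ} {n : ℕ} : ∀ {a b : (Fin d → ℤ) → ℝ → ℂ}, CR s n a → CR s n b →
    CR s n (cv a b) := by
  have base : ∀ {a b : (Fin d → ℤ) → ℝ → ℂ}, CR s 0 a → CR s 0 b → CR s 0 (_root_.cv a b) := by
    intro a b ha hb
    refine ⟨fun k => ?_, fun N T => ?_⟩
    · refine tsum_continuousOn_Ici (fun j => (ha.1 (k - j)).mul (hb.1 j)) (fun T => ?_)
      obtain ⟨u, hu, -, hub⟩ := cv_term_bound ha.2 hb.2 0 T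
      exact ⟨u, hu, fun t h1 h2 j => by simpa using hub t h1 h2 k j⟩
    · obtain ⟨u, hu, -, hub⟩ := cv_term_bound ha.2 hb.2 N T
      refine ⟨∑' j, u j, fun t h1 h2 k => ?_⟩
      have hs : Summable fun j => ‖a (k - j) t * b j t‖ := (cv_summable ha.2 hb.2 h1 k).norm
      calc (1 + ‖k‖) ^ N * ‖_root_.cv a b k t‖
          ≤ (1 + ‖k‖) ^ N * ∑' j, ‖a (k - j) t * b j t‖ := by
            gcongr; exact norm_tsum_le_tsum_norm hs
        _ = ∑' j, (1 + ‖k‖) ^ N * ‖a (k - j) t * b j t‖ := by rw [tsum_mul_left]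
        _ ≤ ∑' j, u j := (hs.mul_left _).tsum_le_tsum (fun j => hub t h1 h2 k j) hu
  induction n with
  | zero => exact base
  | succ n ih =>
    rintro a b ⟨ha, a', ha1, ha2⟩ ⟨hb, b', hb1, hb2⟩
    refine ⟨base ha hb, fun k t => _root_.cv a' b k t + _root_.cv a b' k t, fun k t ht => ?_,
      CR.add (ih ha2 (CR.pred ⟨hb, b', hb1, hb2⟩)) (ih (CR.pred ⟨ha, a', ha1, ha2⟩) hb2)⟩
    have s1 : ∀ t, s ≤ t → Summable fun j => a' (k - j) t * b j t :=
      fun t ht => cv_summable ha2.zero.2 hb.2 ht k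
    have s2 : ∀ t, s ≤ t → Summable fun j => a (k - j) t * b' j t :=
      fun t ht => cv_summable ha.2 hb2.zero.2 ht k
    have e : _root_.cv a' b k t + _root_.cv a b' k t =
        ∑' j, (a' (k - j) t * b j t + a (k - j) t * b' j t) := ((s1 t ht).tsum_add (s2 t ht)).symm
    show HasDerivWithinAt _ (_root_.cv a' b k t + _root_.cv a b' k t) _ _
    rw [e]
    refine tsum_hasDerivWithinAt_Ici (f := fun j t => a (k - j) t * b j t)
      (f' := fun j t => a' (k - j) t * b j t + a (k - j) t * b' j t)
      (fun j t ht => (ha1 (k - j) t ht).mul (hb1 j t ht))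
      (fun t ht => cv_summable ha.2 hb.2 ht k) (fun T => ?_) ht
    obtain ⟨u, hu, -, hub⟩ := cv_term_bound ha2.zero.2 hb.2 0 T
    obtain ⟨v, hv, -, hvb⟩ := cv_term_bound ha.2 hb2.zero.2 0 T
    refine ⟨fun j => u j + v j, hu.add hv, fun t h1 h2 j => ?_⟩
    refine (norm_add_le _ _).trans (add_le_add ?_ ?_)
    · simpa using hub t h1 h2 k j
    · simpa using hvb t h1 h2 k j

end families
end part3

section part4
open Real MeasureTheory Filter
open scoped ContDiff Topology

/-! ### Synthesis of functions from Fourier coefficients -/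

section synth
variable {d : ℕ}

/-- characters of the torus -/
noncomputable def ek (k : Fin d → ℤ) (x : Fin d → ℝ) : ℂ :=
  Complex.exp (((2 * π * ∑ i, (k i : ℝ) * x i : ℝ) : ℂ) * Complex.I)

/-- Fourier multiplier of the derivative -/
noncomputable def mD (i : Fin d) (k : Fin d → ℤ) : ℂ := ((2 * π * (k i : ℝ) : ℝ) : ℂ) * Complex.I

theorem ek_norm (k : Fin d → ℤ) (x : Fin d → ℝ) : ‖ek k x‖ = 1 := Complex.norm_exp_ofReal_mul_I _

theorem ek_add (k j : Fin d → ℤ) (x : Fin d → ℝ) : ek (k + j) x = ek k x * ek j x := by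
  rw [ek, ek, ek, ← Complex.exp_add, ← add_mul, ← Complex.ofReal_add, ← mul_add,
    ← Finset.sum_add_distrib]
  simp [add_mul]

theorem ek_zero (x : Fin d → ℝ) : ek 0 x = 1 := by simp [ek]

theorem ek_periodic (k : Fin d → ℤ) (x : Fin d → ℝ) (m : Fin d → ℤ) :
    ek k (x + fun i => (m i : ℝ)) = ek k x := by
  have : (((2 * π * ∑ i, (k i : ℝ) * (x + fun i => (m i : ℝ)) i : ℝ) : ℂ) * Complex.I) =
    (((2 * π * ∑ i, (k i : ℝ) * x i : ℝ) : ℂ) * Complex.I) +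
      ((∑ i, k i * m i : ℤ) : ℂ) * (2 * π * Complex.I) := by
    push_cast
    simp [mul_add, Finset.sum_add_distrib]
    ring
  rw [ek, this, Complex.exp_periodic.int_mul, ek]

theorem ek_eq_mFourier (k : Fin d → ℤ) (x : Fin d → ℝ) :
    ek k x = UnitAddTorus.mFourier k (fun i => (x i : UnitAddCircle)) := by
  simp only [UnitAddTorus.mFourier, ContinuousMap.coe_mk]
  simp only [fourier_coe_apply]
  rw [← Complex.exp_sum, ek]
  congr 1
  push_cast
  rw [Finset.mul_sum, Finset.sum_mul]
  refine Finset.sum_congr rfl fun i _ => ?_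
  simp
  ring

theorem ek_hasFDerivAt (k : Fin d → ℤ) (x : Fin d → ℝ) :
    HasFDerivAt (ek k) (∑ i, (ContinuousLinearMap.proj (R := ℝ) (φ := fun _ : Fin d => ℝ) i).smulRight
      (mD i k * ek k x)) x := by
  have h1 : HasFDerivAt (fun x : Fin d → ℝ => 2 * π * ∑ i, (k i : ℝ) * x i)
      ((2 * π) • ∑ i, (k i : ℝ) • (ContinuousLinearMap.proj (R := ℝ) (φ := fun _ : Fin d => ℝ) i)) x := by
    refine HasFDerivAt.const_mul ?_ _
    refine HasFDerivAt.fun_sum fun i _ => ?_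
    exact (hasFDerivAt_apply i x).const_mul _
  have h2 := ((Complex.ofRealCLM.hasFDerivAt.comp x h1).mul_const Complex.I).cexp
  refine h2.congr_fderiv ?_
  ext v
  simp [mD, ek, Finset.mul_sum, Finset.sum_mul]
  refine Finset.sum_congr rfl fun i _ => ?_
  ring

theorem mD_bound (i : Fin d) (k : Fin d → ℤ) : ‖mD i k‖ ≤ (2 * π) * (1 + ‖k‖) ^ 1 := by
  have h : |((k i : ℤ) : ℝ)| ≤ ‖k‖ := by
    have := norm_le_pi_norm k i
    rwa [Int.norm_eq_abs] at this
  rw [mD, norm_mul, Complex.norm_I, mul_one, Complex.norm_real, norm_mul, Real.norm_of_nonneg (by positivity),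
    Real.norm_eq_abs, pow_one]
  gcongr
  linarith

theorem ek_contDiff (k : Fin d → ℤ) {n : WithTop ℕ∞} : ContDiff ℝ n (ek k) := by
  unfold ek
  have : ContDiff ℝ n (fun x : Fin d → ℝ => 2 * π * ∑ i, (k i : ℝ) * x i) := by fun_prop
  exact ((Complex.ofRealCLM.contDiff.comp this).mul contDiff_const).cexp

/-- Fourier synthesis -/
noncomputable def syn (c : (Fin d → ℤ) → ℝ → ℂ) (t : ℝ) (x : Fin d → ℝ) : ℂ :=
  ∑' k, c k t * ek k x

/-- Derivative at the level of coefficients -/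
noncomputable def Dc (i : Fin d) (c : (Fin d → ℤ) → ℝ → ℂ) (k : Fin d → ℤ) (t : ℝ) : ℂ :=
  mD i k * c k t

theorem CR.Dc {s : ℝ} {n : ℕ} {c : (Fin d → ℤ) → ℝ → ℂ} (h : CR s n c) (i : Fin d) :
    CR s n (Dc i c) := CR.mult (mD i) (2 * π) 1 (mD_bound i) h

theorem RD.summable_norm {s : ℝ} {c : (Fin d → ℤ) → ℝ → ℂ} (h : RD s c) {t : ℝ} (ht : s ≤ t) :
    Summable fun k => ‖c k t‖ := by
  obtain ⟨u, hu, -, hb⟩ := h.sum_bound 0 t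
  exact Summable.of_nonneg_of_le (fun k => norm_nonneg _)
    (fun k => by simpa using hb t ht le_rfl k) hu

theorem RD.summable_ek {s : ℝ} {c : (Fin d → ℤ) → ℝ → ℂ} (h : RD s c) {t : ℝ} (ht : s ≤ t)
    (x : Fin d → ℝ) : Summable fun k => c k t * ek k x := by
  refine Summable.of_norm_bounded (h.summable_norm ht) fun k => ?_
  rw [norm_mul, ek_norm, mul_one]

theorem syn_periodic (c : (Fin d → ℤ) → ℝ → ℂ) (t : ℝ) (x : Fin d → ℝ) (m : Fin d → ℤ) :
    syn c t (x + fun i => (m i : ℝ)) = syn c t x := by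
  simp only [syn, ek_periodic]

/-- the total derivative of a synthesized function -/
noncomputable def synD (c c' : (Fin d → ℤ) → ℝ → ℂ) (p : ℝ × (Fin d → ℝ)) :
    (ℝ × (Fin d → ℝ)) →L[ℝ] ℂ :=
  (ContinuousLinearMap.fst ℝ ℝ (Fin d → ℝ)).smulRight (syn c' p.1 p.2) +
    ∑ i, ((ContinuousLinearMap.proj (R := ℝ) (φ := fun _ : Fin d => ℝ) i).comp
      (ContinuousLinearMap.snd ℝ ℝ (Fin d → ℝ))).smulRight (syn (Dc i c) p.1 p.2)

theorem syn_hasFDerivWithinAt {s : ℝ} {c c' : (Fin d → ℤ) → ℝ → ℂ} (hc : RD s c) (hc' : RD s c')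
    (hd : ∀ k, ∀ t, s ≤ t → HasDerivWithinAt (c k) (c' k t) (Set.Ici s) t)
    {p : ℝ × (Fin d → ℝ)} (hp : s ≤ p.1) :
    HasFDerivWithinAt (fun p : ℝ × (Fin d → ℝ) => syn c p.1 p.2) (synD c c' p)
      (Set.Ici s ×ˢ Set.univ) p := by
  set P : Fin d → (ℝ × (Fin d → ℝ)) →L[ℝ] ℝ := fun i =>
    ((ContinuousLinearMap.proj (R := ℝ) (φ := fun _ : Fin d => ℝ) i).comp
      (ContinuousLinearMap.snd ℝ ℝ (Fin d → ℝ))) with hP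
  set Q : (ℝ × (Fin d → ℝ)) →L[ℝ] ℝ := ContinuousLinearMap.fst ℝ ℝ (Fin d → ℝ) with hQ
  have hDc : ∀ i, RD s (Dc i c) := by
    intro i N T
    obtain ⟨C, hC⟩ := hc (N + 1) T
    refine ⟨2 * π * C, fun t h1 h2 k => ?_⟩
    calc (1 + ‖k‖) ^ N * ‖Dc i c k t‖ ≤ (1 + ‖k‖) ^ N * (((2 * π) * (1 + ‖k‖) ^ 1) * ‖c k t‖) := by
          rw [Dc, norm_mul]; gcongr; exact mD_bound i k
      _ = 2 * π * ((1 + ‖k‖) ^ (N + 1) * ‖c k t‖) := by ring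
      _ ≤ _ := by gcongr; exact hC t h1 h2 k
  obtain ⟨w, hw, -, hwb⟩ := hc'.sum_bound 0 (p.1 + 1)
  choose v hv hv0 hvb using fun i => (hDc i).sum_bound 0 (p.1 + 1)
  set f' : (Fin d → ℤ) → ℝ × (Fin d → ℝ) → (ℝ × (Fin d → ℝ)) →L[ℝ] ℂ := fun k q =>
    Q.smulRight (c' k q.1 * ek k q.2) + ∑ i, (P i).smulRight (Dc i c k q.1 * ek k q.2) with hf'
  have hder : ∀ k, ∀ q ∈ Set.Icc s (p.1 + 1) ×ˢ (Set.univ : Set (Fin d → ℝ)),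
      HasFDerivWithinAt (fun q : ℝ × (Fin d → ℝ) => c k q.1 * ek k q.2) (f' k q)
        (Set.Icc s (p.1 + 1) ×ˢ (Set.univ : Set (Fin d → ℝ))) q := by
    intro k q hq
    have h1 : HasFDerivWithinAt (fun q : ℝ × (Fin d → ℝ) => c k q.1)
        ((((1 : ℝ →L[ℝ] ℝ)).smulRight (c' k q.1)).comp Q)
        (Set.Icc s (p.1 + 1) ×ˢ (Set.univ : Set (Fin d → ℝ))) q :=
      HasFDerivWithinAt.comp (t := Set.Ici s) q ((hd k q.1 hq.1.1).hasFDerivWithinAt)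
        Q.hasFDerivWithinAt (fun r hr => hr.1.1)
    have h2 := ((ek_hasFDerivAt k q.2).comp q
      (ContinuousLinearMap.snd ℝ ℝ (Fin d → ℝ)).hasFDerivAt).hasFDerivWithinAt
        (s := (Set.Icc s (p.1 + 1) ×ˢ (Set.univ : Set (Fin d → ℝ))))
    refine (h1.mul h2).congr_fderiv ?_
    ext z
    · simp [hf', hP, hQ]; ring
    · simp [hf', hP, hQ, Dc, Finset.mul_sum]
      exact Finset.sum_congr rfl fun i _ => by ring
  have hbd : ∀ k, ∀ q ∈ Set.Icc s (p.1 + 1) ×ˢ (Set.univ : Set (Fin d → ℝ)),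
      ‖f' k q‖ ≤ w k * ‖Q‖ + ∑ i, v i k * ‖P i‖ := by
    intro k q hq
    refine (norm_add_le _ _).trans (add_le_add ?_ ((norm_sum_le _ _).trans
      (Finset.sum_le_sum fun i _ => ?_)))
    · rw [ContinuousLinearMap.norm_smulRight_apply, norm_mul, ek_norm, mul_one, mul_comm]
      gcongr
      simpa using hwb q.1 hq.1.1 hq.1.2 k
    · rw [ContinuousLinearMap.norm_smulRight_apply, norm_mul, ek_norm, mul_one, mul_comm]
      gcongr
      simpa using hvb i q.1 hq.1.1 hq.1.2 k
  have hsm : Summable fun k => w k * ‖Q‖ + ∑ i, v i k * ‖P i‖ :=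
    (hw.mul_right _).add (summable_sum fun i _ => (hv i).mul_right _)
  have main := hasFDerivWithinAt_tsum_convex ((convex_Icc s (p.1 + 1)).prod convex_univ) hsm
    hder hbd (fun q hq => hc.summable_ek hq.1.1 q.2) (x := p) ⟨⟨hp, by linarith⟩, trivial⟩
  have hs1 : Summable fun k => c' k p.1 * ek k p.2 := hc'.summable_ek hp _
  have hs2 : ∀ i, Summable fun k => Dc i c k p.1 * ek k p.2 := fun i => (hDc i).summable_ek hp _
  have e : ∑' k, f' k p = synD c c' p := by
    have a1 : ∀ R : (ℝ × (Fin d → ℝ)) →L[ℝ] ℝ, ∀ z : (Fin d → ℤ) → ℂ, Summable z →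
        HasSum (fun k => R.smulRight (z k)) (R.smulRight (∑' k, z k)) := by
      intro R z hz
      exact (ContinuousLinearMap.smulRightL ℝ (ℝ × (Fin d → ℝ)) ℂ R).hasSum hz.hasSum
    exact ((a1 Q _ hs1).add (hasSum_sum fun i _ => a1 (P i) _ (hs2 i))).tsum_eq
  rw [e] at main
  refine main.mono_of_mem_nhdsWithin ?_
  have : Set.Icc s (p.1 + 1) ×ˢ (Set.univ : Set (Fin d → ℝ)) =
    (Set.Ici s ×ˢ Set.univ) ∩ (Prod.fst ⁻¹' (Set.Iic (p.1 + 1))) := by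
    ext q; simp [Set.mem_prod]
  rw [this]
  refine inter_mem self_mem_nhdsWithin (mem_nhdsWithin_of_mem_nhds ?_)
  exact continuous_fst.continuousAt.preimage_mem_nhds (Iic_mem_nhds (by linarith))

theorem syn_continuousOn {s : ℝ} {c : (Fin d → ℤ) → ℝ → ℂ} (hc : CR s 0 c) :
    ContinuousOn (fun p : ℝ × (Fin d → ℝ) => syn c p.1 p.2) (Set.Ici s ×ˢ Set.univ) := by
  intro p hp
  obtain ⟨u, hu, -, hub⟩ := hc.2.sum_bound 0 (p.1 + 1)
  have h : ContinuousOn (fun p : ℝ × (Fin d → ℝ) => syn c p.1 p.2)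
      (Set.Icc s (p.1 + 1) ×ˢ Set.univ) := by
    refine continuousOn_tsum (fun k => ?_) hu (fun k q hq => ?_)
    · refine ContinuousOn.mul ((hc.1 k).comp continuousOn_fst (fun q hq => hq.1.1)) ?_
      exact ((ek_contDiff k (n := 0)).continuous.comp continuous_snd).continuousOn
    · rw [norm_mul, ek_norm, mul_one]
      simpa using hub q.1 hq.1.1 hq.1.2 k
  refine (h p ⟨⟨hp.1, by linarith⟩, trivial⟩).mono_of_mem_nhdsWithin ?_
  have : Set.Icc s (p.1 + 1) ×ˢ (Set.univ : Set (Fin d → ℝ)) =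
    (Set.Ici s ×ˢ Set.univ) ∩ (Prod.fst ⁻¹' (Set.Iic (p.1 + 1))) := by
    ext q; simp [Set.mem_prod]
  rw [this]
  refine inter_mem self_mem_nhdsWithin (mem_nhdsWithin_of_mem_nhds ?_)
  exact continuous_fst.continuousAt.preimage_mem_nhds (Iic_mem_nhds (by linarith))

theorem syn_contDiffOn {s : ℝ} (n : ℕ) : ∀ {c : (Fin d → ℤ) → ℝ → ℂ}, CR s n c →
    ContDiffOn ℝ n (fun p : ℝ × (Fin d → ℝ) => syn c p.1 p.2) (Set.Ici s ×ˢ Set.univ) := by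
  induction n with
  | zero => intro c hc; exact contDiffOn_zero.2 (syn_continuousOn hc)
  | succ n ih =>
    intro c hc
    have hDi := fun i => ih ((CR.pred hc).Dc i)
    obtain ⟨h0, c', h1, h2⟩ := hc
    have hu : UniqueDiffOn ℝ (Set.Ici s ×ˢ (Set.univ : Set (Fin d → ℝ))) :=
      slab_uniqueDiff (uniqueDiffOn_Ici s)
    push_cast
    rw [contDiffOn_succ_iff_hasFDerivWithinAt_of_uniqueDiffOn hu]
    refine ⟨by simp, synD c c', ?_, fun p hp => syn_hasFDerivWithinAt h0.2 h2.zero.2 h1 hp.1⟩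
    unfold synD
    refine ContDiffOn.add ?_ (ContDiffOn.sum fun i _ => ?_)
    · exact (ContinuousLinearMap.smulRightL ℝ (ℝ × (Fin d → ℝ)) ℂ _).contDiff.comp_contDiffOn (ih h2)
    · exact (ContinuousLinearMap.smulRightL ℝ (ℝ × (Fin d → ℝ)) ℂ _).contDiff.comp_contDiffOn (hDi i)

theorem syn_time {s : ℝ} {c c' : (Fin d → ℤ) → ℝ → ℂ} (hc : RD s c) (hc' : RD s c')
    (hd : ∀ k, ∀ t, s ≤ t → HasDerivWithinAt (c k) (c' k t) (Set.Ici s) t)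
    {t : ℝ} (ht : s ≤ t) (x : Fin d → ℝ) :
    HasDerivWithinAt (fun r => syn c r x) (syn c' t x) (Set.Ici s) t := by
  have h1 := syn_hasFDerivWithinAt hc hc' hd (p := (t, x)) ht
  have h2 : HasDerivWithinAt (fun r : ℝ => (r, x)) ((1:ℝ), (0 : Fin d → ℝ)) (Set.Ici s) t :=
    (hasDerivWithinAt_id t _).prodMk (hasDerivWithinAt_const t _ x)
  have := HasFDerivWithinAt.comp_hasDerivWithinAt (t := Set.Ici s ×ˢ Set.univ) t h1 h2
    (fun r hr => ⟨hr, trivial⟩)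
  simpa [synD, Function.comp_def] using this

/-- spatial derivative: reduces to the case of time-constant coefficients -/
theorem syn_space {s : ℝ} {c : (Fin d → ℤ) → ℝ → ℂ} (hc : RD s c)
    {t : ℝ} (ht : s ≤ t) (x : Fin d → ℝ) :
    HasFDerivAt (syn c t) (∑ i, (ContinuousLinearMap.proj (R := ℝ) (φ := fun _ : Fin d => ℝ) i).smulRight
      (syn (Dc i c) t x)) x := by
  have hb : RD t (fun k _ => c k t) := by
    intro N T
    obtain ⟨C, hC⟩ := hc N t
    exact ⟨C, fun r _ _ k => hC t ht le_rfl k⟩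
  have h1 := syn_hasFDerivWithinAt (c' := fun _ _ => 0) hb (CR.zero_fun (n := 0)).2
    (fun k r _ => hasDerivWithinAt_const _ _ _) (p := (t, x)) le_rfl
  have h2 : HasFDerivWithinAt (fun x : Fin d → ℝ => (t, x))
      (ContinuousLinearMap.inr ℝ ℝ (Fin d → ℝ)) Set.univ x :=
    (hasFDerivAt_prodMk_right t x).hasFDerivWithinAt
  have h3 := h1.comp x h2 (fun y _ => ⟨le_refl t, trivial⟩)
  rw [hasFDerivWithinAt_univ] at h3
  refine HasFDerivAt.congr_fderiv h3 ?_
  ext w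
  simp [synD, syn, Dc]

theorem syn_cv {s : ℝ} {a b : (Fin d → ℤ) → ℝ → ℂ} (ha : RD s a) (hb : RD s b)
    {t : ℝ} (ht : s ≤ t) (x : Fin d → ℝ) : syn (cv a b) t x = syn a t x * syn b t x := by
  have na : Summable fun k => ‖a k t * ek k x‖ := (ha.summable_ek ht x).norm
  have nb : Summable fun k => ‖b k t * ek k x‖ := (hb.summable_ek ht x).norm
  have hprod := summable_mul_of_summable_norm na nb
  rw [syn, syn, syn, tsum_mul_tsum_of_summable_norm na nb]
  let e : (Fin d → ℤ) × (Fin d → ℤ) ≃ (Fin d → ℤ) × (Fin d → ℤ) :=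
    { toFun := fun p => (p.1 - p.2, p.2)
      invFun := fun p => (p.1 + p.2, p.2)
      left_inv := fun p => by simp
      right_inv := fun p => by simp }
  rw [← e.tsum_eq]
  have h2 := (e.summable_iff.2 hprod)
  rw [show (∑' c, a (e c).1 t * ek (e c).1 x * (b (e c).2 t * ek (e c).2 x)) =
    ∑' c, ((fun z : (Fin d → ℤ) × (Fin d → ℤ) => a z.1 t * ek z.1 x * (b z.2 t * ek z.2 x)) ∘ e) c
    from rfl, h2.tsum_prod]
  refine tsum_congr fun k => ?_
  rw [cv, ← tsum_mul_right]
  refine tsum_congr fun j => ?_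
  have : ek k x = ek (k - j) x * ek j x := by rw [← ek_add]; simp
  simp only [Function.comp, e, Equiv.coe_fn_mk]
  rw [this]; ring

end synth
end part4

section part5
open Real MeasureTheory Filter
open scoped ContDiff Topology

/-! ### Fourier coefficients of smooth periodic functions -/

section analysis
variable {d : ℕ}

/-- smooth space-periodic functions on `[s,∞) × ℝ^d` -/
def SmP (s : ℝ) (f : ℝ → (Fin d → ℝ) → ℂ) : Prop :=
  ContDiffOn ℝ (⊤ : ℕ∞) (fun p : ℝ × (Fin d → ℝ) => f p.1 p.2) (Set.Ici s ×ˢ Set.univ) ∧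
  ∀ t, s ≤ t → ∀ x : Fin d → ℝ, ∀ k : Fin d → ℤ, f t (x + fun i => (k i : ℝ)) = f t x

/-- Fourier coefficients -/
noncomputable def fc (f : ℝ → (Fin d → ℝ) → ℂ) (k : Fin d → ℤ) (t : ℝ) : ℂ :=
  ∫ x in Set.Icc (0 : Fin d → ℝ) 1, f t x * ek (-k) x

theorem SmP.dx {s : ℝ} {f : ℝ → (Fin d → ℝ) → ℂ} (h : SmP s f) (v : Fin d → ℝ) :
    SmP s (fun t x => fderiv ℝ (f t) x v) := by
  refine ⟨slab_dx (uniqueDiffOn_Ici s) h.1 v, fun t ht x k => ?_⟩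
  have : (fun y => f t (y + fun i => (k i : ℝ))) = f t := funext fun y => h.2 t ht y k
  show fderiv ℝ (f t) (x + fun i => (k i : ℝ)) v = fderiv ℝ (f t) x v
  conv_rhs => rw [← this]
  rw [fderiv_comp_add_right]

theorem SmP.dt {s : ℝ} {f : ℝ → (Fin d → ℝ) → ℂ} (h : SmP s f) :
    SmP s (fun t x => derivWithin (fun r => f r x) (Set.Ici s) t) := by
  refine ⟨slab_dt (uniqueDiffOn_Ici s) h.1, fun t ht x k => ?_⟩
  exact derivWithin_congr (fun r hr => h.2 r hr x k) (h.2 t ht x k)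

theorem fc_dx {s : ℝ} {f : ℝ → (Fin d → ℝ) → ℂ} (h : SmP s f) (i : Fin d) (k : Fin d → ℤ)
    {t : ℝ} (ht : s ≤ t) :
    fc (fun t x => fderiv ℝ (f t) x (Pi.single i 1)) k t = mD i k * fc f k t := by
  have hf : ContDiff ℝ (⊤ : ℕ∞) (f t) := slab_space h.1 ht
  have hf1 : ContDiff ℝ 1 (f t) := hf.of_le (by simp)
  have he : ContDiff ℝ 1 (ek (-k)) := ek_contDiff (-k)
  have h0 := cell_integral_fderiv (f := fun x => f t x * ek (-k) x) (hf1.mul he)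
    (fun x m => by rw [h.2 t ht, ek_periodic]) (Pi.single i 1)
  have e : ∀ x, fderiv ℝ (fun x => f t x * ek (-k) x) x (Pi.single i 1) =
      fderiv ℝ (f t) x (Pi.single i 1) * ek (-k) x - mD i k * (f t x * ek (-k) x) := by
    intro x
    have h1 := (hf1.differentiable (by simp) x).hasFDerivAt.mul (ek_hasFDerivAt (-k) x)
    have h2 : fderiv ℝ (fun x => f t x * ek (-k) x) x = _ := h1.fderiv
    rw [h2]
    have h3 : mD i (-k) = - mD i k := by simp [mD]
    have h4 : (∑ j, (ContinuousLinearMap.proj (R := ℝ) (φ := fun _ : Fin d => ℝ) j).smulRight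
      (mD j (-k) * ek (-k) x)) (Pi.single i 1) = mD i (-k) * ek (-k) x := by
      simp [Pi.single_apply]
    simp only [add_apply, smul_apply, h4, h3, smul_eq_mul]
    ring
  simp only [e] at h0
  have c1 : Continuous (fun x => fderiv ℝ (f t) x (Pi.single i 1) * ek (-k) x) :=
    ((hf1.continuous_fderiv (by simp)).clm_apply continuous_const).mul he.continuous
  have c2 : Continuous (fun x => mD i k * (f t x * ek (-k) x)) :=
    continuous_const.mul (hf1.continuous.mul he.continuous)
  rw [integral_sub (c1.continuousOn.integrableOn_compact isCompact_Icc)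
    (c2.continuousOn.integrableOn_compact isCompact_Icc), integral_const_mul, sub_eq_zero] at h0
  exact h0

theorem fc_dt {s : ℝ} {f : ℝ → (Fin d → ℝ) → ℂ} (h : SmP s f) (k : Fin d → ℤ)
    {t : ℝ} (ht : s ≤ t) :
    HasDerivWithinAt (fc f k) (fc (fun t x => derivWithin (fun r => f r x) (Set.Ici s) t) k t)
      (Set.Ici s) t := by
  have hF : ContDiffOn ℝ (⊤ : ℕ∞) (fun p : ℝ × (Fin d → ℝ) => f p.1 p.2 * ek (-k) p.2)
      (Set.Ici s ×ˢ Set.univ) :=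
    h.1.mul ((ek_contDiff (-k)).comp contDiff_snd).contDiffOn
  have h1 := slab_integral_deriv (F := fun t x => f t x * ek (-k) x) (convex_Ici s) isClosed_Ici
    (uniqueDiffOn_Ici s) (hF.of_le (by simp)) (t := t) ht
  have e : ∀ x, derivWithin (fun r => f r x * ek (-k) x) (Set.Ici s) t =
      derivWithin (fun r => f r x) (Set.Ici s) t * ek (-k) x := by
    intro x
    have h2 := (slab_time (by simp) h.1 ht x).differentiableWithinAt.hasDerivWithinAt
    exact (h2.mul_const (ek (-k) x)).derivWithin (uniqueDiffOn_Ici s t ht)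
  simp only [e] at h1
  exact h1

theorem fc_RD_aux {s : ℝ} (N : ℕ) : ∀ {f : ℝ → (Fin d → ℝ) → ℂ}, SmP s f → ∀ T : ℝ,
    ∃ C : ℝ, ∀ t, s ≤ t → t ≤ T → ∀ k, (1 + ‖k‖) ^ N * ‖fc f k t‖ ≤ C := by
  induction N with
  | zero =>
    intro f h T
    have hcomp : IsCompact (Set.Icc s T ×ˢ Set.Icc (0 : Fin d → ℝ) 1) :=
      isCompact_Icc.prod isCompact_Icc
    obtain ⟨C, hC⟩ := hcomp.exists_bound_of_continuousOn
      (h.1.continuousOn.mono (fun p hp => ⟨hp.1.1, trivial⟩))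
    refine ⟨C * (volume : Measure (Fin d → ℝ)).real (Set.Icc 0 1), fun t h1 h2 k => ?_⟩
    rw [pow_zero, one_mul]
    refine norm_setIntegral_le_of_norm_le_const (isCompact_Icc.measure_lt_top) (fun x hx => ?_)
    rw [norm_mul, ek_norm, mul_one]
    exact hC (t, x) ⟨⟨h1, h2⟩, hx⟩
  | succ N ih =>
    intro f h T
    obtain ⟨C, hC⟩ := ih h T
    choose B hB using fun i => ih (h.dx (Pi.single i 1)) T
    refine ⟨C + ∑ i, B i, fun t h1 h2 k => ?_⟩
    have hk : ‖k‖ ≤ ∑ i, ‖mD i k‖ := by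
      have hm : ∀ i, ‖k i‖ ≤ ‖mD i k‖ := by
        intro i
        rw [mD, norm_mul, Complex.norm_I, mul_one, Complex.norm_real, norm_mul,
          Real.norm_of_nonneg (by positivity), Int.norm_eq_abs, Real.norm_eq_abs]
        have := Real.pi_gt_three
        nlinarith [abs_nonneg ((k i : ℤ) : ℝ)]
      refine (pi_norm_le_iff_of_nonneg (Finset.sum_nonneg fun i _ => norm_nonneg _)).2 fun i => ?_
      exact (hm i).trans (Finset.single_le_sum (f := fun i => ‖mD i k‖)
        (fun i _ => norm_nonneg _) (Finset.mem_univ i))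
    calc (1 + ‖k‖) ^ (N + 1) * ‖fc f k t‖
        = (1 + ‖k‖) ^ N * ‖fc f k t‖ + ‖k‖ * ((1 + ‖k‖) ^ N * ‖fc f k t‖) := by ring
      _ ≤ (1 + ‖k‖) ^ N * ‖fc f k t‖ + (∑ i, ‖mD i k‖) * ((1 + ‖k‖) ^ N * ‖fc f k t‖) := by gcongr
      _ = (1 + ‖k‖) ^ N * ‖fc f k t‖ + ∑ i, (1 + ‖k‖) ^ N *
            ‖fc (fun t x => fderiv ℝ (f t) x (Pi.single i 1)) k t‖ := by
          rw [Finset.sum_mul]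
          congr 1
          refine Finset.sum_congr rfl fun i _ => ?_
          rw [fc_dx h i k h1, norm_mul]; ring
      _ ≤ C + ∑ i, B i := add_le_add (hC t h1 h2 k) (Finset.sum_le_sum fun i _ => hB i t h1 h2 k)

theorem fc_CR {s : ℝ} (n : ℕ) : ∀ {f : ℝ → (Fin d → ℝ) → ℂ}, SmP s f → CR s n (fc f) := by
  have base : ∀ {f : ℝ → (Fin d → ℝ) → ℂ}, SmP s f → CR s 0 (fc f) := fun {f} h =>
    ⟨fun k t ht => (fc_dt h k ht).continuousWithinAt, fun N T => fc_RD_aux N h T⟩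
  induction n with
  | zero => exact base
  | succ n ih =>
    intro f h
    exact ⟨base h, _, fun k t ht => fc_dt h k ht, ih h.dt⟩

theorem fourier_inversion {s : ℝ} {f : ℝ → (Fin d → ℝ) → ℂ} (h : SmP s f) {t : ℝ} (ht : s ≤ t)
    (x : Fin d → ℝ) : syn (fc f) t x = f t x := by
  obtain ⟨g, hg⟩ := torus_lift (h.2 t ht)
  have hf : ContDiff ℝ (⊤ : ℕ∞) (f t) := slab_space h.1 ht
  have hgc : Continuous g := by
    have hq : IsOpenQuotientMap (Pi.map fun (_ : Fin d) (x : ℝ) => (x : UnitAddCircle)) :=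
      IsOpenQuotientMap.piMap fun _ => QuotientAddGroup.isOpenQuotientMap_mk
    rw [hq.isQuotientMap.continuous_iff]
    have : g ∘ (Pi.map fun (_ : Fin d) (x : ℝ) => (x : UnitAddCircle)) = f t := by
      ext x; exact hg x
    rw [this]; exact hf.continuous
  have hset : {x : Fin d → ℝ | ∀ i, x i ∈ Set.Ioc ((0 : Fin d → ℝ) i) ((0 : Fin d → ℝ) i + 1)}
      =ᵐ[volume] Set.Icc (0 : Fin d → ℝ) 1 := by
    have := Measure.univ_pi_Ioc_ae_eq_Icc (μ := fun _ : Fin d => (volume : Measure ℝ))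
      (f := (0 : Fin d → ℝ)) (g := 1)
    have h2 : {x : Fin d → ℝ | ∀ i, x i ∈ Set.Ioc ((0 : Fin d → ℝ) i) ((0 : Fin d → ℝ) i + 1)} =
        Set.univ.pi fun i => Set.Ioc ((0 : Fin d → ℝ) i) ((1 : Fin d → ℝ) i) := by
      ext x; simp
    rw [h2]; exact this
  have hco : ∀ k, UnitAddTorus.mFourierCoeff g k = fc f k t := by
    intro k
    rw [UnitAddTorus.mFourierCoeff_eq_integral g k 0, setIntegral_congr_set hset, fc]
    refine integral_congr_ae (Eventually.of_forall fun x => ?_)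
    simp only [hg, ← ek_eq_mFourier, smul_eq_mul]
    ring
  have hsum : Summable (UnitAddTorus.mFourierCoeff g) := by
    have : UnitAddTorus.mFourierCoeff g = fun k => fc f k t := funext hco
    rw [this]
    exact ((fc_CR 0 h).2.summable_norm ht).of_norm
  have := UnitAddTorus.hasSum_mFourier_series_apply_of_summable (f := ⟨g, hgc⟩) hsum
    (fun i => (x i : UnitAddCircle))
  have h3 := this.tsum_eq
  simp only [ContinuousMap.coe_mk, hg, hco, ← ek_eq_mFourier, smul_eq_mul] at h3
  exact h3

end analysis
end part5

section part6
open Real MeasureTheory Filter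
open scoped ContDiff Topology

/-! ### The Fourier side of the advection-diffusion equation -/

section gop
variable {d : ℕ}

/-- continuous-in-time coefficient families with summable bounds -/
def UB (U : Fin d → (Fin d → ℤ) → ℝ → ℂ) : Prop :=
  (∀ i k, Continuous (U i k)) ∧ ∀ i, ∀ N : ℕ, ∀ T : ℝ, ∃ u : (Fin d → ℤ) → ℝ, Summable u ∧
    ∀ t, t ≤ T → ∀ k, (1 + ‖k‖) ^ N * ‖U i k t‖ ≤ u k

/-- the transport operator -/
noncomputable def Gop (U : Fin d → (Fin d → ℤ) → ℝ → ℂ) (b : (Fin d → ℤ) → ℝ → ℂ)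
    (k : Fin d → ℤ) (r : ℝ) : ℂ := -∑ i, cv (U i) (Dc i b) k r

/-- size of the transport operator -/
noncomputable def Sop (U : Fin d → (Fin d → ℤ) → ℝ → ℂ) (N : ℕ) (r : ℝ) : ℝ :=
  ∑ i, 2 * π * ∑' m, (1 + ‖m‖) ^ (N + 1) * ‖U i m r‖

theorem UB.summable {U : Fin d → (Fin d → ℤ) → ℝ → ℂ} (hU : UB U) (i : Fin d) (N : ℕ) (r : ℝ) :
    Summable fun m => (1 + ‖m‖) ^ N * ‖U i m r‖ := by
  obtain ⟨u, hu, hb⟩ := hU.2 i N r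
  exact Summable.of_nonneg_of_le (fun k => by positivity) (fun k => hb r le_rfl k) hu

theorem Sop_nonneg (U : Fin d → (Fin d → ℤ) → ℝ → ℂ) (N : ℕ) (r : ℝ) : 0 ≤ Sop U N r :=
  Finset.sum_nonneg fun i _ => mul_nonneg (by positivity) (tsum_nonneg fun m => by positivity)

theorem continuous_of_Iio {V : Type*} [TopologicalSpace V] {f : ℝ → V}
    (h : ∀ T, ContinuousOn f (Set.Iio T)) : Continuous f := by
  rw [continuous_iff_continuousAt]
  intro t
  exact (h (t + 1)).continuousAt (Iio_mem_nhds (by linarith))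

theorem Sop_continuous {U : Fin d → (Fin d → ℤ) → ℝ → ℂ} (hU : UB U) (N : ℕ) :
    Continuous (Sop U N) := by
  refine continuous_finsetSum _ fun i _ => continuous_const.mul ?_
  refine continuous_of_Iio fun T => ?_
  obtain ⟨u, hu, hb⟩ := hU.2 i (N + 1) T
  refine continuousOn_tsum (fun m => (continuous_const.mul (hU.1 i m).norm).continuousOn) hu
    fun m t ht => ?_
  rw [Real.norm_of_nonneg (by positivity)]
  exact hb t (le_of_lt ht) m

theorem gop_term {U : Fin d → (Fin d → ℤ) → ℝ → ℂ} {b : (Fin d → ℤ) → ℝ → ℂ} {r M : ℝ} {N : ℕ}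
    (hb : ∀ j, (1 + ‖j‖) ^ N * ‖b j r‖ ≤ M) (i : Fin d) (k j : Fin d → ℤ) :
    (1 + ‖k‖) ^ N * ‖U i (k - j) r * Dc i b j r‖ ≤
      (2 * π * M * (1 + ‖k‖)) * ((1 + ‖k - j‖) ^ (N + 1) * ‖U i (k - j) r‖) := by
  have hj : 1 + ‖j‖ ≤ (1 + ‖k - j‖) * (1 + ‖k‖) := by
    have := wt_le j k
    rwa [norm_sub_rev] at this
  calc (1 + ‖k‖) ^ N * ‖U i (k - j) r * Dc i b j r‖
      ≤ ((1 + ‖k - j‖) * (1 + ‖j‖)) ^ N *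
          (‖U i (k - j) r‖ * ((2 * π * (1 + ‖j‖) ^ 1) * ‖b j r‖)) := by
        rw [norm_mul, Dc, norm_mul]
        gcongr
        · exact wt_le k j
        · exact mD_bound i j
    _ = ((1 + ‖k - j‖) ^ N * ‖U i (k - j) r‖) * (2 * π * (1 + ‖j‖) * ((1 + ‖j‖) ^ N * ‖b j r‖)) := by
        rw [mul_pow]; ring
    _ ≤ ((1 + ‖k - j‖) ^ N * ‖U i (k - j) r‖) *
          (2 * π * ((1 + ‖k - j‖) * (1 + ‖k‖)) * M) := by
        gcongr
        exact hb j
    _ = _ := by ring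

theorem gop_summable {U : Fin d → (Fin d → ℤ) → ℝ → ℂ} (hU : UB U) {b : (Fin d → ℤ) → ℝ → ℂ}
    {r M : ℝ} (hb : ∀ j, ‖b j r‖ ≤ M) (i : Fin d) (k : Fin d → ℤ) :
    Summable fun j => U i (k - j) r * Dc i b j r := by
  have h1 := ((Equiv.subLeft k).summable_iff.2 (hU.summable i (0 + 1) r)).mul_left
    (2 * π * M * (1 + ‖k‖))
  refine Summable.of_norm_bounded h1 fun j => ?_
  have := gop_term (U := U) (N := 0) (b := b) (r := r) (M := M) (by simpa using hb) i k j
  simpa using this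

theorem gop_bound {U : Fin d → (Fin d → ℤ) → ℝ → ℂ} (hU : UB U) {b : (Fin d → ℤ) → ℝ → ℂ}
    {r M : ℝ} {N : ℕ} (hb : ∀ j, (1 + ‖j‖) ^ N * ‖b j r‖ ≤ M) (k : Fin d → ℤ) :
    (1 + ‖k‖) ^ N * ‖Gop U b k r‖ ≤ M * (1 + ‖k‖) * Sop U N r := by
  have hb0 : ∀ j, ‖b j r‖ ≤ M := fun j => by
    refine le_trans ?_ (hb j)
    exact le_mul_of_one_le_left (norm_nonneg _) (one_le_pow₀ (by linarith [norm_nonneg j]))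
  rw [Gop, norm_neg]
  calc (1 + ‖k‖) ^ N * ‖∑ i, cv (U i) (Dc i b) k r‖
      ≤ (1 + ‖k‖) ^ N * ∑ i, ‖cv (U i) (Dc i b) k r‖ := by gcongr; exact norm_sum_le _ _
    _ = ∑ i, (1 + ‖k‖) ^ N * ‖cv (U i) (Dc i b) k r‖ := Finset.mul_sum _ _ _
    _ ≤ ∑ i, (2 * π * M * (1 + ‖k‖)) * ∑' m, (1 + ‖m‖) ^ (N + 1) * ‖U i m r‖ := by
        refine Finset.sum_le_sum fun i _ => ?_
        have hs := (gop_summable hU hb0 i k).norm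
        have h1 := ((Equiv.subLeft k).summable_iff.2 (hU.summable i (N + 1) r)).mul_left
          (2 * π * M * (1 + ‖k‖))
        calc (1 + ‖k‖) ^ N * ‖cv (U i) (Dc i b) k r‖
            ≤ (1 + ‖k‖) ^ N * ∑' j, ‖U i (k - j) r * Dc i b j r‖ := by
              gcongr; exact norm_tsum_le_tsum_norm hs
          _ = ∑' j, (1 + ‖k‖) ^ N * ‖U i (k - j) r * Dc i b j r‖ := by rw [tsum_mul_left]
          _ ≤ ∑' j, (2 * π * M * (1 + ‖k‖)) *
                (((fun m => (1 + ‖m‖) ^ (N + 1) * ‖U i m r‖) ∘ (Equiv.subLeft k)) j) :=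
              (hs.mul_left _).tsum_le_tsum (fun j => gop_term hb i k j) h1
          _ = _ := by
              rw [tsum_mul_left]
              congr 1
              exact (Equiv.subLeft k).tsum_eq (fun m => (1 + ‖m‖) ^ (N + 1) * ‖U i m r‖)
    _ = _ := by
        rw [Sop, Finset.mul_sum]
        refine Finset.sum_congr rfl fun i _ => ?_
        ring

theorem gop_continuous {U : Fin d → (Fin d → ℤ) → ℝ → ℂ} (hU : UB U) {b : (Fin d → ℤ) → ℝ → ℂ}
    {M : ℝ} (hb : ∀ j r, ‖b j r‖ ≤ M) (hbc : ∀ j, Continuous (b j)) (k : Fin d → ℤ) :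
    Continuous (Gop U b k) := by
  refine (continuous_finsetSum _ fun i _ => ?_).neg
  refine continuous_of_Iio fun T => ?_
  obtain ⟨u, hu, hub⟩ := hU.2 i 1 T
  have h1 := ((Equiv.subLeft k).summable_iff.2 hu).mul_left (2 * π * M * (1 + ‖k‖))
  refine continuousOn_tsum (fun j => ((hU.1 i (k - j)).mul
    (continuous_const.mul (hbc j))).continuousOn) h1 fun j t ht => ?_
  have h2 := gop_term (U := U) (N := 0) (b := b) (r := t) (M := M)
    (by simpa using fun j => hb j t) i k j
  have hM : 0 ≤ M := (norm_nonneg _).trans (hb j t)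
  rw [pow_zero, one_mul] at h2
  refine h2.trans ?_
  gcongr
  exact hub t (le_of_lt ht) (k - j)

theorem gop_sub {U : Fin d → (Fin d → ℤ) → ℝ → ℂ} (hU : UB U) {b b' : (Fin d → ℤ) → ℝ → ℂ}
    {r M M' : ℝ} (hb : ∀ j, ‖b j r‖ ≤ M) (hb' : ∀ j, ‖b' j r‖ ≤ M') (k : Fin d → ℤ) :
    Gop U (fun j r => b j r - b' j r) k r = Gop U b k r - Gop U b' k r := by
  have : ∀ i, cv (U i) (Dc i fun j r => b j r - b' j r) k r =
      cv (U i) (Dc i b) k r - cv (U i) (Dc i b') k r := by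
    intro i
    rw [cv, cv, cv, ← (gop_summable hU hb i k).tsum_sub (gop_summable hU hb' i k)]
    refine tsum_congr fun j => ?_
    simp only [Dc]; ring
  simp only [Gop, this, Finset.sum_sub_distrib]
  ring

theorem gop_smul (U : Fin d → (Fin d → ℤ) → ℝ → ℂ) (b : (Fin d → ℤ) → ℝ → ℂ)
    (φ : ℝ → ℂ) (k : Fin d → ℤ) (r : ℝ) :
    Gop U (fun j r => φ r * b j r) k r = φ r * Gop U b k r := by
  have : ∀ i, cv (U i) (Dc i fun j r => φ r * b j r) k r = φ r * cv (U i) (Dc i b) k r := by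
    intro i
    rw [cv, cv, ← tsum_mul_left]
    refine tsum_congr fun j => ?_
    simp only [Dc]; ring
  simp only [Gop, this, ← Finset.mul_sum]
  ring

end gop
end part6

section part7
open Real MeasureTheory Filter
open scoped ContDiff Topology

section fixedpoint
variable {d : ℕ}

/-- symbol of `-κΔ` -/
noncomputable def lamk (κ : ℝ) (k : Fin d → ℤ) : ℝ := κ * ∑ i, (2 * π * (k i : ℝ)) ^ 2

theorem lamk_lb {κ : ℝ} (hκ : 0 < κ) (k : Fin d → ℤ) : κ * ‖k‖ ^ 2 ≤ lamk κ k := by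
  unfold lamk
  gcongr
  have h0 : 0 ≤ ∑ i, (2 * π * (k i : ℝ)) ^ 2 := Finset.sum_nonneg fun i _ => sq_nonneg _
  have : ‖k‖ ≤ √(∑ i, (2 * π * (k i : ℝ)) ^ 2) := by
    refine (pi_norm_le_iff_of_nonneg (Real.sqrt_nonneg _)).2 fun i => ?_
    refine Real.le_sqrt_of_sq_le ?_
    have h1 : ‖k i‖ ^ 2 ≤ (2 * π * (k i : ℝ)) ^ 2 := by
      rw [Int.norm_eq_abs, sq_abs, mul_pow]
      have := Real.pi_gt_three
      have h2 : (1:ℝ) ≤ (2 * π) ^ 2 := one_le_pow₀ (by linarith)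
      nlinarith [sq_nonneg ((k i : ℤ) : ℝ)]
    exact h1.trans (Finset.single_le_sum (f := fun i => (2 * π * (k i : ℝ)) ^ 2)
        (fun i _ => sq_nonneg _) (Finset.mem_univ i))
  calc ‖k‖ ^ 2 ≤ (√(∑ i, (2 * π * (k i : ℝ)) ^ 2)) ^ 2 := by gcongr
    _ = _ := Real.sq_sqrt h0

theorem duhamel_half {E E' : ℝ → ℝ} (hE : ∀ r, HasDerivAt E (E' r) r) (hE' : Continuous E')
    {G : ℝ → ℂ} {M s t : ℝ} (hst : s ≤ t) (hEs : E s = 0) (hM : 0 ≤ M)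
    (hb : ∀ r, s ≤ r → ‖G r‖ ≤ M / 2 * E' r) :
    ‖(Real.exp (-E t) : ℂ) * ∫ r in s..t, (Real.exp (E r) : ℂ) * G r‖ ≤ M / 2 := by
  have hEc : Continuous E := continuous_iff_continuousAt.2 fun r => (hE r).continuousAt
  have hd : ∀ r ∈ Set.uIcc s t, HasDerivAt (fun r => M / 2 * Real.exp (E r))
      (Real.exp (E r) * (M / 2 * E' r)) r := by
    intro r _
    exact (((hE r).exp).const_mul (M / 2)).congr_deriv (by ring)
  have hc : Continuous fun r => Real.exp (E r) * (M / 2 * E' r) := by fun_prop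
  have h1 : ‖∫ r in s..t, (Real.exp (E r) : ℂ) * G r‖ ≤
      ∫ r in s..t, Real.exp (E r) * (M / 2 * E' r) := by
    refine intervalIntegral.norm_integral_le_of_norm_le hst ?_ (hc.intervalIntegrable _ _)
    refine Eventually.of_forall fun r hr => ?_
    rw [norm_mul, Complex.norm_real, Real.norm_of_nonneg (Real.exp_pos _).le]
    gcongr
    exact hb r hr.1.le
  rw [intervalIntegral.integral_eq_sub_of_hasDerivAt hd (hc.intervalIntegrable _ _), hEs,
    Real.exp_zero] at h1
  rw [norm_mul, Complex.norm_real, Real.norm_of_nonneg (Real.exp_pos _).le]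
  calc Real.exp (-E t) * ‖∫ r in s..t, (Real.exp (E r) : ℂ) * G r‖
      ≤ Real.exp (-E t) * (M / 2 * Real.exp (E t)) := by
        gcongr; linarith
    _ = M / 2 := by
        rw [mul_left_comm, ← Real.exp_add]; simp

/-- Mild solution of the coefficient system (with an exponential weight). -/
theorem mild_exists {U : Fin d → (Fin d → ℤ) → ℝ → ℂ} (hU : UB U) (s : ℝ)
    (g : (Fin d → ℤ) → ℂ) {Cg : ℝ} (hg : ∀ k, ‖g k‖ ≤ Cg)
    {E E' : (Fin d → ℤ) → ℝ → ℝ} (hE : ∀ k r, HasDerivAt (E k) (E' k r) r)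
    (hE' : ∀ k, Continuous (E' k)) (hEs : ∀ k, E k s = 0)
    (hEb : ∀ k r, (1 + ‖k‖) * Sop U 0 r ≤ 1 / 2 * E' k r) :
    ∃ b : (Fin d → ℤ) → ℝ → ℂ, ∃ M : ℝ, (∀ k, Continuous (b k)) ∧ (∀ k r, ‖b k r‖ ≤ M) ∧
      ∀ k t, s ≤ t → b k t = (Real.exp (-E k t) : ℂ) *
        (g k + ∫ r in s..t, (Real.exp (E k r) : ℂ) * Gop U b k r) := by
  have hEc : ∀ k, Continuous (E k) := fun k =>
    continuous_iff_continuousAt.2 fun r => (hE k r).continuousAt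
  have hE'0 : ∀ k r, 0 ≤ E' k r := fun k r => by
    have := (mul_nonneg (by positivity : 0 ≤ 1 + ‖k‖) (Sop_nonneg U 0 r)).trans (hEb k r)
    linarith
  have hE0 : ∀ k t, s ≤ t → 0 ≤ E k t := by
    intro k t hst
    have hm : Monotone (E k) := monotone_of_deriv_nonneg (fun r => (hE k r).differentiableAt)
      (fun r => by rw [(hE k r).deriv]; exact hE'0 k r)
    rw [← hEs k]; exact hm hst
  let X := BoundedContinuousFunction ((Fin d → ℤ) × ℝ) ℂ
  let cu : X → (Fin d → ℤ) → ℝ → ℂ := fun b k r => b (k, r)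
  have hcb : ∀ (b : X) k r, ‖cu b k r‖ ≤ ‖b‖ := fun b k r => b.norm_coe_le_norm _
  have hcc : ∀ (b : X) k, Continuous (cu b k) := fun b k =>
    b.continuous.comp (continuous_const.prodMk continuous_id)
  have hGc : ∀ (b : X) k, Continuous (Gop U (cu b) k) := fun b k =>
    gop_continuous hU (hcb b) (hcc b) k
  have hGb : ∀ (b : (Fin d → ℤ) → ℝ → ℂ) (M : ℝ), 0 ≤ M → (∀ k r, ‖b k r‖ ≤ M) → ∀ k r,
      ‖Gop U b k r‖ ≤ M / 2 * E' k r := by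
    intro b M hM h k r
    have h1 := gop_bound hU (b := b) (r := r) (M := M) (N := 0) (by simpa using fun j => h j r) k
    rw [pow_zero, one_mul] at h1
    have h2 := mul_le_mul_of_nonneg_left (hEb k r) hM
    linarith
  let Φf : X → (Fin d → ℤ) × ℝ → ℂ := fun b p =>
    (Real.exp (-E p.1 (max p.2 s)) : ℂ) * (g p.1 + ∫ r in s..(max p.2 s),
      (Real.exp (E p.1 r) : ℂ) * Gop U (cu b) p.1 r)
  have hIc : ∀ (b : X) k, Continuous fun r => (Real.exp (E k r) : ℂ) * Gop U (cu b) k r := by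
    intro b k
    refine Continuous.mul ?_ (hGc b k)
    exact Complex.continuous_ofReal.comp (Real.continuous_exp.comp (hEc k))
  have hPc : ∀ (b : X) k, Continuous fun t => ∫ r in s..t, (Real.exp (E k r) : ℂ) * Gop U (cu b) k r :=
    fun b k => intervalIntegral.continuous_primitive
      (fun a c => (hIc b k).intervalIntegrable a c) s
  have hΦc : ∀ b, Continuous (Φf b) := by
    intro b
    rw [continuous_prod_of_discrete_left]
    intro k
    have hm : Continuous fun t : ℝ => max t s := continuous_id.max continuous_const
    refine Continuous.mul ?_ ?_
    · exact Complex.continuous_ofReal.comp (Real.continuous_exp.comp ((hEc k).comp hm).neg)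
    · exact Continuous.add (f := fun _ => g k) continuous_const ((hPc b k).comp hm)
  have hΦb : ∀ b p, ‖Φf b p‖ ≤ Cg + ‖b‖ / 2 := by
    intro b p
    have h1 := duhamel_half (hE p.1) (hE' p.1) (le_max_right p.2 s) (hEs p.1) (norm_nonneg b)
      (fun r _ => hGb (cu b) ‖b‖ (norm_nonneg b) (hcb b) p.1 r)
    have h2 : ‖(Real.exp (-E p.1 (max p.2 s)) : ℂ) * g p.1‖ ≤ Cg := by
      rw [norm_mul, Complex.norm_real, Real.norm_of_nonneg (Real.exp_pos _).le]
      refine le_trans ?_ (hg p.1)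
      refine mul_le_of_le_one_left (norm_nonneg _) ?_
      rw [Real.exp_le_one_iff]
      linarith [hE0 p.1 (max p.2 s) (le_max_right p.2 s)]
    show ‖(Real.exp (-E p.1 (max p.2 s)) : ℂ) * (g p.1 + _)‖ ≤ _
    rw [mul_add]
    exact (norm_add_le _ _).trans (add_le_add h2 h1)
  let Φ : X → X := fun b => BoundedContinuousFunction.ofNormedAddCommGroup (Φf b) (hΦc b) _ (hΦb b)
  have hcontr : ContractingWith (1/2 : NNReal) Φ := by
    refine ⟨by rw [← NNReal.coe_lt_coe]; push_cast; norm_num, ?_⟩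
    refine LipschitzWith.of_dist_le_mul fun b b' => ?_
    have hnn : (0:ℝ) ≤ ((1/2 : NNReal) : ℝ) * dist b b' := by positivity
    rw [BoundedContinuousFunction.dist_le hnn]
    intro p
    show dist (Φf b p) (Φf b' p) ≤ _
    have hdd : ∀ k r, ‖(fun k r => cu b k r - cu b' k r) k r‖ ≤ dist b b' := by
      intro k r
      rw [← dist_eq_norm]
      exact BoundedContinuousFunction.dist_coe_le_dist _
    have h1 := duhamel_half (hE p.1) (hE' p.1) (le_max_right p.2 s) (hEs p.1)
      (dist_nonneg (x := b) (y := b'))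
      (fun r _ => hGb (fun k r => cu b k r - cu b' k r) _ dist_nonneg hdd p.1 r)
    have e : Φf b p - Φf b' p = (Real.exp (-E p.1 (max p.2 s)) : ℂ) * ∫ r in s..(max p.2 s),
      (Real.exp (E p.1 r) : ℂ) * Gop U (fun k r => cu b k r - cu b' k r) p.1 r := by
      have : ∀ r, (Real.exp (E p.1 r) : ℂ) * Gop U (fun k r => cu b k r - cu b' k r) p.1 r =
        (Real.exp (E p.1 r) : ℂ) * Gop U (cu b) p.1 r -
          (Real.exp (E p.1 r) : ℂ) * Gop U (cu b') p.1 r := by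
        intro r
        rw [gop_sub hU (fun j => hcb b j r) (fun j => hcb b' j r), mul_sub]
      simp only [this]
      rw [intervalIntegral.integral_sub ((hIc b p.1).intervalIntegrable _ _)
        ((hIc b' p.1).intervalIntegrable _ _)]
      simp only [Φf]
      ring
    rw [dist_eq_norm, e]
    refine h1.trans (le_of_eq ?_)
    push_cast
    ring
  have : Nonempty X := ⟨0⟩
  have hfix := hcontr.fixedPoint_isFixedPt
  set b := hcontr.fixedPoint with hbdef
  refine ⟨cu b, ‖b‖, hcc b, hcb b, fun k t hst => ?_⟩
  have h2 : (Φ b) (k, t) = b (k, t) := by rw [hfix]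
  have h3 : Φf b (k, t) = b (k, t) := h2
  simp only [Φf, max_eq_left hst] at h3
  exact h3.symm

end fixedpoint
end part7

section part8
open Real MeasureTheory Filter
open scoped ContDiff Topology

section coef
variable {d : ℕ}

theorem ode_bound {a G : ℝ → ℂ} {lam s T K : ℝ} (hlam : 0 < lam)
    (ha : ∀ t, s ≤ t → HasDerivWithinAt a (-(lam : ℂ) * a t + G t) (Set.Ici s) t)
    (hG : ∀ t, s ≤ t → t ≤ T → ‖G t‖ ≤ K) {t : ℝ} (hst : s ≤ t) (htT : t ≤ T) :
    ‖a t‖ ≤ ‖a s‖ + K / lam := by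
  have hK : 0 ≤ K := (norm_nonneg _).trans (hG t hst htT)
  set h : ℝ → ℂ := fun r => (Real.exp (lam * (r - s)) : ℂ) * a r with hh
  have hexp : ∀ r, HasDerivAt (fun r => Real.exp (lam * (r - s)))
      (Real.exp (lam * (r - s)) * lam) r := by
    intro r
    have := (((hasDerivAt_id r).sub_const s).const_mul lam).exp
    simpa using this
  have hd : ∀ r, s ≤ r → HasDerivWithinAt h ((Real.exp (lam * (r - s)) : ℂ) * G r)
      (Set.Ici s) r := by
    intro r hr
    have h1 := ((hexp r).ofReal_comp.hasDerivWithinAt (s := Set.Ici s)).mul (ha r hr)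
    refine h1.congr_deriv ?_
    push_cast
    ring
  have hB : ∀ r, HasDerivAt (fun r => ‖a s‖ + K / lam * Real.exp (lam * (r - s)))
      (K * Real.exp (lam * (r - s))) r := by
    intro r
    refine (((hexp r).const_mul (K / lam)).const_add ‖a s‖).congr_deriv ?_
    field_simp
  have key := image_norm_le_of_norm_deriv_right_le_deriv_boundary (a := s) (b := t)
    (f := h) (f' := fun r => (Real.exp (lam * (r - s)) : ℂ) * G r)
    (fun r hr => ((hd r hr.1).continuousWithinAt).mono (fun q hq => hq.1))
    (fun r hr => (hd r hr.1).mono (Set.Ici_subset_Ici.2 hr.1))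
    (B := fun r => ‖a s‖ + K / lam * Real.exp (lam * (r - s)))
    (B' := fun r => K * Real.exp (lam * (r - s)))
    (by simp [hh]; positivity) hB
    (fun r hr => by
      rw [norm_mul, Complex.norm_real, Real.norm_of_nonneg (Real.exp_pos _).le, mul_comm]
      gcongr
      exact hG r hr.1 (hr.2.le.trans htT))
    (x := t) ⟨hst, le_rfl⟩
  rw [hh] at key
  simp only [norm_mul, Complex.norm_real] at key
  rw [Real.norm_of_nonneg (Real.exp_pos _).le] at key
  have he1 : 1 ≤ Real.exp (lam * (t - s)) := Real.one_le_exp (by nlinarith)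
  have h3 : Real.exp (lam * (t - s)) * ‖a t‖ ≤ Real.exp (lam * (t - s)) * (‖a s‖ + K / lam) := by
    nlinarith [norm_nonneg (a s)]
  exact le_of_mul_le_mul_left h3 (Real.exp_pos _)

theorem coef_exists {κ : ℝ} (hκ : 0 < κ) (s : ℝ) {U : Fin d → (Fin d → ℤ) → ℝ → ℂ}
    (hU : ∀ i, CR s 0 (U i)) (g : (Fin d → ℤ) → ℂ)
    (hg : ∀ N : ℕ, ∃ C : ℝ, ∀ k, (1 + ‖k‖) ^ N * ‖g k‖ ≤ C) :
    ∃ a : (Fin d → ℤ) → ℝ → ℂ, CR s 0 a ∧ (∀ k, a k s = g k) ∧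
      ∀ k t, s ≤ t → HasDerivWithinAt (a k) (-(lamk κ k : ℂ) * a k t + Gop U a k t)
        (Set.Ici s) t := by
  set W : Fin d → (Fin d → ℤ) → ℝ → ℂ := fun i k t => U i k (max t s) with hW
  have hWU : ∀ a k t, s ≤ t → Gop W a k t = Gop U a k t := by
    intro a k t ht
    simp only [Gop, cv, hW, max_eq_left ht]
  have hWB : UB W := by
    refine ⟨fun i k => ?_, fun i N T => ?_⟩
    · exact ((hU i).1 k).comp_continuous (continuous_id.max continuous_const)
        (fun t => le_max_right t s)
    · obtain ⟨u, hu, -, hub⟩ := (hU i).2.sum_bound N (max T s)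
      exact ⟨u, hu, fun t ht k => hub _ (le_max_right _ _) (max_le_max_right s ht) k⟩
  set S : ℝ → ℝ := Sop W 0 with hS
  have hSc : Continuous S := Sop_continuous hWB 0
  set l : ℝ → ℝ := fun r => 2 * S r + S r ^ 2 / κ with hl
  have hlc : Continuous l := by fun_prop
  set Lam : ℝ → ℝ := fun t => ∫ r in s..t, l r with hLam
  have hLamd : ∀ t, HasDerivAt Lam (l t) t := fun t =>
    intervalIntegral.integral_hasDerivAt_right (hlc.intervalIntegrable _ _)
      hlc.aestronglyMeasurable.stronglyMeasurableAtFilter hlc.continuousAt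
  have hLamc : Continuous Lam := continuous_iff_continuousAt.2 fun r => (hLamd r).continuousAt
  set E : (Fin d → ℤ) → ℝ → ℝ := fun k t => lamk κ k * (t - s) + Lam t with hE
  have hEd : ∀ k r, HasDerivAt (E k) (lamk κ k + l r) r := by
    intro k r
    refine ((((hasDerivAt_id r).sub_const s).const_mul (lamk κ k)).add (hLamd r)).congr_deriv ?_
    ring
  have hEb : ∀ (k : Fin d → ℤ) r, (1 + ‖k‖) * Sop W 0 r ≤ 1 / 2 * (lamk κ k + l r) := by
    intro k r
    have h1 := lamk_lb hκ k
    have h2 : ‖k‖ * S r ≤ 1 / 2 * (κ * ‖k‖ ^ 2) + 1 / 2 * (S r ^ 2 / κ) := by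
      have h3 : 0 ≤ (κ * ‖k‖ - S r) ^ 2 / κ := by positivity
      have h4 : (κ * ‖k‖ - S r) ^ 2 / κ = κ * ‖k‖ ^ 2 - 2 * (‖k‖ * S r) + S r ^ 2 / κ := by
        field_simp
        ring
      linarith
    show (1 + ‖k‖) * S r ≤ 1 / 2 * (lamk κ k + (2 * S r + S r ^ 2 / κ))
    linarith
  obtain ⟨Cg, hCg⟩ := hg 0
  obtain ⟨b, M, hbc, hbM, hb⟩ := mild_exists hWB s g (Cg := Cg) (by simpa using hCg) hEd
    (fun k => continuous_const.add hlc) (by simp [hE, hLam]) hEb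
  set a : (Fin d → ℤ) → ℝ → ℂ := fun k t => (Real.exp (Lam t) : ℂ) * b k t with ha
  have hGa : ∀ k t, Gop W a k t = (Real.exp (Lam t) : ℂ) * Gop W b k t := fun k t =>
    gop_smul W b (fun t => (Real.exp (Lam t) : ℂ)) k t
  have hac : ∀ k, Continuous (a k) := fun k =>
    (Complex.continuous_ofReal.comp (Real.continuous_exp.comp hLamc)).mul (hbc k)
  have has : ∀ k, a k s = g k := by
    intro k
    simp [ha, hb k s le_rfl, hE, hLam]
  have hode : ∀ k t, s ≤ t → HasDerivWithinAt (a k) (-(lamk κ k : ℂ) * a k t + Gop W a k t)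
      (Set.Ici s) t := by
    intro k t ht
    have hIc : Continuous fun r => (Real.exp (E k r) : ℂ) * Gop W b k r := by
      refine Continuous.mul ?_ (gop_continuous hWB hbM hbc k)
      exact Complex.continuous_ofReal.comp (Real.continuous_exp.comp
        (continuous_iff_continuousAt.2 fun r => (hEd k r).continuousAt))
    have hH : HasDerivAt (fun t => g k + ∫ r in s..t, (Real.exp (E k r) : ℂ) * Gop W b k r)
        ((Real.exp (E k t) : ℂ) * Gop W b k t) t :=
      (intervalIntegral.integral_hasDerivAt_right (hIc.intervalIntegrable _ _)
        hIc.aestronglyMeasurable.stronglyMeasurableAtFilter hIc.continuousAt).const_add (g k)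
    have hexp : HasDerivAt (fun t => (Real.exp (-(lamk κ k * (t - s))) : ℝ))
        (Real.exp (-(lamk κ k * (t - s))) * (-lamk κ k)) t := by
      have := ((((hasDerivAt_id t).sub_const s).const_mul (lamk κ k)).neg).exp
      simpa using this
    have hprod := (hexp.ofReal_comp.mul hH).hasDerivWithinAt (s := Set.Ici s)
    have heq : ∀ r, s ≤ r → a k r = (Real.exp (-(lamk κ k * (r - s))) : ℂ) *
        (g k + ∫ r in s..r, (Real.exp (E k r) : ℂ) * Gop W b k r) := by
      intro r hr
      simp only [ha]
      rw [hb k r hr, ← mul_assoc, ← Complex.ofReal_mul, ← Real.exp_add]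
      congr 3
      simp only [hE]; ring
    have h2 := hprod.congr_of_eventuallyEq_of_mem (f₁ := a k)
      (by filter_upwards [self_mem_nhdsWithin] with r hr using heq r hr) ht
    refine h2.congr_deriv ?_
    rw [heq t ht, hGa]
    have h5 : (Real.exp (-(lamk κ k * (t - s))) : ℂ) * (Real.exp (E k t) : ℂ) =
        (Real.exp (Lam t) : ℂ) := by
      rw [← Complex.ofReal_mul, ← Real.exp_add]
      congr 2
      simp only [hE]; ring
    rw [← mul_assoc _ _ (Gop W b k t), h5]
    push_cast
    ring
  have hbase : ∀ T : ℝ, ∃ C : ℝ, ∀ t, s ≤ t → t ≤ T → ∀ k, ‖a k t‖ ≤ C := by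
    intro T
    obtain ⟨C, hC⟩ := (isCompact_Icc (a := s) (b := T)).exists_bound_of_continuousOn
      (Real.continuous_exp.comp hLamc).continuousOn
    refine ⟨C * M, fun t h1 h2 k => ?_⟩
    simp only [ha]
    rw [norm_mul, Complex.norm_real]
    have hc := hC t ⟨h1, h2⟩
    exact mul_le_mul hc (hbM k t) (norm_nonneg _) ((norm_nonneg _).trans hc)
  have hRD : RD s a := by
    intro N
    induction N with
    | zero => intro T; simpa using hbase T
    | succ N ih =>
      intro T
      obtain ⟨C0, hC0⟩ := hbase T
      obtain ⟨C, hC⟩ := ih T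
      obtain ⟨Cg', hCg'⟩ := hg (N + 1)
      obtain ⟨B, hB⟩ := (isCompact_Icc (a := s) (b := T)).exists_bound_of_continuousOn
        (Sop_continuous hWB N).continuousOn
      refine ⟨max C0 (Cg' + 4 * (|C| * |B|) / κ), fun t h1 h2 k => ?_⟩
      rcases eq_or_ne k 0 with hk | hk
      · rw [hk]
        refine le_trans ?_ (le_max_left _ _)
        simpa using hC0 t h1 h2 0
      · refine le_trans ?_ (le_max_right _ _)
        have hk1 : 1 ≤ ‖k‖ := by
          obtain ⟨i, hi⟩ := Function.ne_iff.1 hk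
          have h3 := norm_le_pi_norm k i
          have h4 : (1:ℤ) ≤ |k i| := Int.one_le_abs hi
          have h5 : (1:ℝ) ≤ ‖k i‖ := by rw [Int.norm_eq_abs]; exact_mod_cast h4
          linarith
        have hlb : κ * (1 + ‖k‖) ^ 2 / 4 ≤ lamk κ k := by
          refine le_trans ?_ (lamk_lb hκ k)
          have : (1 + ‖k‖) ^ 2 ≤ 4 * ‖k‖ ^ 2 := by nlinarith
          have := mul_le_mul_of_nonneg_left this hκ.le
          linarith
        have hlpos : 0 < lamk κ k := lt_of_lt_of_le (by positivity) hlb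
        have hw : 0 < (1 + ‖k‖) ^ N := by positivity
        have hG : ∀ r, s ≤ r → r ≤ T → ‖Gop W a k r‖ ≤
            ((1 + ‖k‖) ^ N)⁻¹ * (|C| * (1 + ‖k‖) * |B|) := by
          intro r hr1 hr2
          rw [le_inv_mul_iff₀ hw]
          refine (gop_bound hWB (fun j => (hC r hr1 hr2 j).trans (le_abs_self C)) k).trans ?_
          gcongr
          have := hB r ⟨hr1, hr2⟩
          exact ((le_abs_self _).trans this).trans (le_abs_self B)
        have h6 := ode_bound hlpos (hode k) hG h1 h2
        rw [has] at h6
        calc (1 + ‖k‖) ^ (N + 1) * ‖a k t‖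
            ≤ (1 + ‖k‖) ^ (N + 1) * (‖g k‖ +
              ((1 + ‖k‖) ^ N)⁻¹ * (|C| * (1 + ‖k‖) * |B|) / lamk κ k) := by gcongr
          _ ≤ (1 + ‖k‖) ^ (N + 1) * (‖g k‖ +
              ((1 + ‖k‖) ^ N)⁻¹ * (|C| * (1 + ‖k‖) * |B|) / (κ * (1 + ‖k‖) ^ 2 / 4)) := by
              gcongr
          _ = (1 + ‖k‖) ^ (N + 1) * ‖g k‖ + 4 * (|C| * |B|) / κ := by
              have h8 : (1 + ‖k‖) ≠ 0 := by positivity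
              field_simp
              try ring
          _ ≤ _ := by gcongr; exact hCg' k
  exact ⟨a, ⟨fun k => (hac k).continuousOn, hRD⟩, has, fun k t ht => by
    rw [← hWU a k t ht]; exact hode k t ht⟩

theorem lamk_mult_bound {κ : ℝ} (hκ : 0 < κ) (k : Fin d → ℤ) :
    ‖(-(lamk κ k : ℂ))‖ ≤ (κ * ∑ _i : Fin d, (2 * π) ^ 2) * (1 + ‖k‖) ^ 2 := by
  rw [norm_neg, Complex.norm_real, Real.norm_of_nonneg]
  · unfold lamk
    rw [mul_assoc, Finset.sum_mul]
    gcongr with i _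
    rw [mul_pow]
    refine mul_le_mul_of_nonneg_left ?_ (by positivity)
    have h : |((k i : ℤ) : ℝ)| ≤ ‖k‖ := by
      have := norm_le_pi_norm k i
      rwa [Int.norm_eq_abs] at this
    rw [← sq_abs]
    gcongr
    linarith
  · exact (by positivity : 0 ≤ κ * ‖k‖ ^ 2).trans (lamk_lb hκ k)

theorem coef_smooth {κ : ℝ} (hκ : 0 < κ) {s : ℝ} {U : Fin d → (Fin d → ℤ) → ℝ → ℂ}
    (hU : ∀ n i, CR s n (U i)) {a : (Fin d → ℤ) → ℝ → ℂ} (ha : CR s 0 a)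
    (hode : ∀ k t, s ≤ t → HasDerivWithinAt (a k) (-(lamk κ k : ℂ) * a k t + Gop U a k t)
        (Set.Ici s) t) : ∀ n, CR s n a ∧ CR s n (fun k t => -(lamk κ k : ℂ) * a k t + Gop U a k t) := by
  have hstep : ∀ n, CR s n a → CR s n (fun k t => -(lamk κ k : ℂ) * a k t + Gop U a k t) := by
    intro n h
    refine CR.add (CR.mult _ _ 2 (lamk_mult_bound hκ) h) ?_
    have h1 := CR.mult (fun _ => (-1 : ℂ)) 1 0 (by simp)
      (CR.sum Finset.univ (fun i _ => CR.cv (hU n i) (h.Dc i)))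
    have e : Gop U a = fun k t => (-1 : ℂ) * ∑ i, cv (U i) (Dc i a) k t := by
      ext k t; simp [Gop]
    rw [e]; exact h1
  intro n
  induction n with
  | zero => exact ⟨ha, hstep 0 ha⟩
  | succ n ih =>
    have : CR s (n + 1) a := ⟨ha, _, hode, ih.2⟩
    exact ⟨this, hstep _ this⟩

end coef
end part8

section part9
open Real MeasureTheory Filter
open scoped ContDiff Topology

section existence
variable {d : ℕ}

theorem syn_re_pd {s : ℝ} {c : (Fin d → ℤ) → ℝ → ℂ} (hc : RD s c) {t : ℝ} (ht : s ≤ t)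
    (i : Fin d) (x : Fin d → ℝ) :
    pd d i (fun x => (syn c t x).re) x = (syn (Dc i c) t x).re := by
  have h : HasFDerivAt (fun x => (syn c t x).re) _ x :=
    Complex.reCLM.hasFDerivAt.comp x (syn_space hc ht x)
  rw [pd, h.fderiv]
  simp [Pi.single_apply]

/-- Solvability of the advection-diffusion equation. -/
theorem pde_exists {κ : ℝ} (hκ : 0 < κ) {s : ℝ} {u : ℝ → (Fin d → ℝ) → (Fin d → ℝ)}
    (hu : ContDiffOn ℝ (⊤ : ℕ∞) (fun p : ℝ × (Fin d → ℝ) => u p.1 p.2) (Set.Ici s ×ˢ Set.univ))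
    (hper : ∀ t ∈ Set.Ici s, ∀ i : Fin d, PeriodicIn d (fun x => u t x i))
    {g : (Fin d → ℝ) → ℝ} (hg : ContDiff ℝ (⊤ : ℕ∞) g) (hgper : PeriodicIn d g) :
    ∃ ζ : ℝ → (Fin d → ℝ) → ℝ,
      ContDiffOn ℝ (⊤ : ℕ∞) (fun p : ℝ × (Fin d → ℝ) => ζ p.1 p.2) (Set.Ici s ×ˢ Set.univ) ∧
      (∀ t ∈ Set.Ici s, PeriodicIn d (ζ t)) ∧ (∀ x, ζ s x = g x) ∧
      (∀ t ∈ Set.Ici s, ∀ x,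
        derivWithin (fun r => ζ r x) (Set.Ici s) t - κ * lap d (ζ t) x
          + ∑ i, u t x i * pd d i (ζ t) x = 0) := by
  set f : Fin d → ℝ → (Fin d → ℝ) → ℂ := fun i t x => (u t x i : ℂ) with hf
  have hfS : ∀ i, SmP s (f i) := by
    intro i
    refine ⟨?_, fun t ht x k => ?_⟩
    · exact Complex.ofRealCLM.contDiff.comp_contDiffOn (contDiffOn_pi.1 hu i)
    · exact congrArg (fun r : ℝ => (r : ℂ)) (hper t ht i x k)
  have hgS : SmP s (fun (_ : ℝ) x => (g x : ℂ)) := by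
    refine ⟨?_, fun t ht x k => ?_⟩
    · exact Complex.ofRealCLM.contDiff.comp_contDiffOn (hg.comp contDiff_snd).contDiffOn
    · exact congrArg (fun r : ℝ => (r : ℂ)) (hgper x k)
  set U : Fin d → (Fin d → ℤ) → ℝ → ℂ := fun i => fc (f i) with hU
  have hUC : ∀ n i, CR s n (U i) := fun n i => fc_CR n (hfS i)
  obtain ⟨a, ha0, has, hode⟩ := coef_exists hκ s (hUC 0)
    (fun k => fc (fun (_ : ℝ) x => (g x : ℂ)) k s) (fun N => by
      obtain ⟨C, hC⟩ := (fc_CR 0 hgS).2 N s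
      exact ⟨C, fun k => hC s le_rfl le_rfl k⟩)
  have hsm := coef_smooth hκ hUC ha0 hode
  have hRa : RD s a := ha0.2
  have hRD : ∀ i, RD s (Dc i a) := fun i => (ha0.Dc i).2
  have hRDD : ∀ i, RD s (Dc i (Dc i a)) := fun i => ((ha0.Dc i).Dc i).2
  refine ⟨fun t x => (syn a t x).re, ?_, ?_, ?_, ?_⟩
  · refine Complex.reCLM.contDiff.comp_contDiffOn (g := Complex.reCLM) (f := fun p : ℝ × (Fin d → ℝ) => syn a p.1 p.2) ?_
    exact contDiffOn_infty.2 fun n => syn_contDiffOn n (hsm n).1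
  · intro t ht x k
    simp only [syn_periodic]
  · intro x
    have h1 : syn a s x = syn (fc (fun (_ : ℝ) x => (g x : ℂ))) s x := by
      simp only [syn, has]
    show (syn a s x).re = g x
    rw [h1, fourier_inversion hgS le_rfl]
    simp
  · intro t ht x
    have ht' : s ≤ t := ht
    have hder := Complex.reCLM.hasFDerivAt.comp_hasDerivWithinAt t
      (syn_time hRa (hsm 0).2.2 hode ht' x)
    have hder2 : HasDerivWithinAt (fun r => (syn a r x).re) _ (Set.Ici s) t := hder
    rw [hder2.derivWithin (uniqueDiffOn_Ici s t ht)]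
    have hpd : ∀ i, pd d i (fun x => (syn a t x).re) = fun x => (syn (Dc i a) t x).re :=
      fun i => funext fun x => syn_re_pd hRa ht' i x
    simp only [lap, hpd, syn_re_pd (hRD _) ht']
    have e : syn (fun k t => -(lamk κ k : ℂ) * a k t + Gop U a k t) t x =
        κ * ∑ i, syn (Dc i (Dc i a)) t x - ∑ i, (u t x i : ℂ) * syn (Dc i a) t x := by
      have e1 : ∀ i, (u t x i : ℂ) * syn (Dc i a) t x = syn (cv (U i) (Dc i a)) t x := by
        intro i
        rw [syn_cv (hUC 0 i).2 (hRD i) ht', fourier_inversion (hfS i) ht']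
      simp only [e1]
      have s1 : ∀ i, HasSum (fun k => Dc i (Dc i a) k t * ek k x) (syn (Dc i (Dc i a)) t x) :=
        fun i => ((hRDD i).summable_ek ht' x).hasSum
      have s2 : ∀ i, HasSum (fun k => cv (U i) (Dc i a) k t * ek k x)
          (syn (cv (U i) (Dc i a)) t x) :=
        fun i => ((CR.cv (hUC 0 i) (ha0.Dc i)).2.summable_ek ht' x).hasSum
      have s3 := ((hasSum_sum fun i (_ : i ∈ Finset.univ) => s1 i).mul_left (κ : ℂ)).sub
        (hasSum_sum fun i (_ : i ∈ Finset.univ) => s2 i)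
      rw [← s3.tsum_eq, syn]
      refine tsum_congr fun k => ?_
      have hl : -(lamk κ k : ℂ) = κ * ∑ i, mD i k * mD i k := by
        simp only [lamk, mD]
        push_cast
        rw [← mul_neg, ← Finset.sum_neg_distrib]
        congr 1
        refine Finset.sum_congr rfl fun i _ => ?_
        linear_combination (-(2 * π * (k i : ℂ)) ^ 2) * Complex.I_mul_I
      rw [hl, Gop]
      simp only [Dc, ← sub_eq_add_neg, sub_mul, Finset.sum_mul, Finset.mul_sum]
      congr 1
      refine Finset.sum_congr rfl fun i _ => ?_
      ring
    have hre : Complex.reCLM (syn (fun k t => -(lamk κ k : ℂ) * a k t + Gop U a k t) t x) =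
      κ * ∑ i, (syn (Dc i (Dc i a)) t x).re - ∑ i, u t x i * (syn (Dc i a) t x).re := by
      rw [e]
      simp
    rw [hre]
    ring

end existence
end part9

section part10
open Real MeasureTheory Filter
open scoped ContDiff Topology

section sigma

open scoped Manifold in
theorem profile_exists (a : ℕ → ℝ) (ha : ∀ n : ℕ, rexp (n + 1) ≤ a n) :
    ∃ P : ℝ → ℝ, ContDiff ℝ (⊤ : ℕ∞) P ∧ (∀ y, rexp y ≤ P y) ∧
      ∀ n : ℕ, ∀ y ∈ Set.Icc ((n : ℝ) + 1/4) (n + 3/4), P y = a n := by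
  set t : ℝ → Set ℝ := fun y =>
    {p | rexp y ≤ p ∧ ∀ n : ℕ, y ∈ Set.Icc ((n : ℝ) + 1/4) (n + 3/4) → p = a n} with ht
  have hconv : ∀ y, Convex ℝ (t y) := by
    intro y p hp q hq α β hα hβ hab
    refine ⟨?_, fun n hn => ?_⟩
    · have h1 := hp.1
      have h2 := hq.1
      simp only [smul_eq_mul]
      calc rexp y = α * rexp y + β * rexp y := by rw [← add_mul, hab, one_mul]
        _ ≤ _ := by gcongr
    · rw [hp.2 n hn, hq.2 n hn, ← add_smul, hab, one_smul]
  have hloc : ∀ y : ℝ, ∃ c : ℝ, ∀ᶠ z in 𝓝 y, c ∈ t z := by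
    intro y
    by_cases h : ∃ n : ℕ, y ∈ Set.Icc ((n : ℝ) + 1/4) (n + 3/4)
    · obtain ⟨n, hn⟩ := h
      refine ⟨a n, ?_⟩
      have : Set.Ioo (n : ℝ) (n + 1) ∈ 𝓝 y :=
        Ioo_mem_nhds (by linarith [hn.1]) (by linarith [hn.2])
      filter_upwards [this] with z hz
      refine ⟨le_trans (Real.exp_le_exp.2 hz.2.le) (ha n), fun m hm => ?_⟩
      have h1 : (n : ℝ) < m + 1 := by linarith [hz.1, hm.2]
      have h2 : (m : ℝ) < n + 1 := by linarith [hz.2, hm.1]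
      have h1' : n < m + 1 := by exact_mod_cast h1
      have h2' : m < n + 1 := by exact_mod_cast h2
      have : m = n := by omega
      rw [this]
    · push Not at h
      refine ⟨rexp (y + 1), ?_⟩
      have key : ∀ᶠ z in 𝓝 y, ∀ n : ℕ, z ∉ Set.Icc ((n : ℝ) + 1/4) (n + 3/4) := by
        by_cases hy0 : y < 1/4
        · filter_upwards [Iio_mem_nhds hy0] with z hz n hn
          have : (0:ℝ) ≤ n := Nat.cast_nonneg n
          have hz' : z < 1/4 := hz
          linarith [hn.1]
        · push Not at hy0
          set m := ⌊y⌋₊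
          have hm1 : (m : ℝ) ≤ y := Nat.floor_le (by linarith)
          have hm2 : y < m + 1 := Nat.lt_floor_add_one y
          have hm := h m
          rw [Set.mem_Icc, not_and_or] at hm
          rcases hm with hm | hm <;> push Not at hm
          · filter_upwards [Ioo_mem_nhds (show (m:ℝ) - 1/4 < y by linarith) hm] with z hz n hn
            have h1 : (n : ℝ) < m := by linarith [hz.2, hn.1]
            have h1' : n + 1 ≤ m := by exact_mod_cast h1
            have h2 : (n : ℝ) + 1 ≤ m := by exact_mod_cast h1'
            linarith [hz.1, hn.2]
          · filter_upwards [Ioo_mem_nhds hm (show y < (m:ℝ) + 5/4 by linarith)] with z hz n hn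
            have h1 : (m : ℝ) < n := by linarith [hz.1, hn.2]
            have h1' : m + 1 ≤ n := by exact_mod_cast h1
            have h2 : (m : ℝ) + 1 ≤ n := by exact_mod_cast h1'
            linarith [hz.2, hn.1]
      filter_upwards [key, Iio_mem_nhds (show y < y + 1 by linarith)] with z hz hz2
      exact ⟨Real.exp_le_exp.2 (le_of_lt hz2), fun n hn => absurd hn (hz n)⟩
  obtain ⟨g, hg⟩ := exists_contMDiffMap_forall_mem_convex_of_local_const (n := (⊤ : ℕ∞))
    𝓘(ℝ, ℝ) hconv hloc
  exact ⟨g, g.contMDiff.contDiff, fun y => (hg y).1, fun n y hy => (hg y).2 n hy⟩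

theorem sigma_exists (A : ℕ → ℝ) : ∃ σ : ℝ → ℝ, ∃ a : ℕ → ℝ,
    ContDiffOn ℝ (⊤ : ℕ∞) σ (Set.Ico 0 1) ∧ StrictMonoOn σ (Set.Ico 0 1) ∧
    Set.BijOn σ (Set.Ico 0 1) (Set.Ici 0) ∧ (∀ n, A n ≤ a n ∧ 0 < a n) ∧
    ∀ n : ℕ, ∀ t ∈ Set.Icc (1 - rexp (-(n + 1/4))) (1 - rexp (-(n + 3/4))),
      deriv σ t = a n ∧
      σ t = σ (1 - rexp (-(n + 1/4))) + a n * (t - (1 - rexp (-(n + 1/4)))) := by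
  set a : ℕ → ℝ := fun n => max (A n) (rexp (n + 1)) with ha
  obtain ⟨P, hP, hPexp, hPa⟩ := profile_exists a (fun n => le_max_right _ _)
  set ρ : ℝ → ℝ := fun r => P (-Real.log (1 - r)) with hρ
  have hρs : ContDiffOn ℝ (⊤ : ℕ∞) ρ (Set.Iio 1) := by
    have : ContDiffOn ℝ (⊤ : ℕ∞) (fun r : ℝ => -Real.log (1 - r)) (Set.Iio 1) := by
      refine (ContDiffOn.log (by fun_prop) ?_).neg
      intro x hx
      have : x < 1 := hx
      exact ne_of_gt (by linarith)
    exact hP.comp_contDiffOn this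
  have hρc := hρs.continuousOn
  have hρge : ∀ r < 1, (1 - r)⁻¹ ≤ ρ r := by
    intro r hr
    have := hPexp (-Real.log (1 - r))
    rwa [Real.exp_neg, Real.exp_log (by linarith)] at this
  have hρpos : ∀ r < 1, 0 < ρ r := fun r hr =>
    lt_of_lt_of_le (inv_pos.2 (by linarith)) (hρge r hr)
  have hintg : ∀ x < 1, ∀ y < 1, IntervalIntegrable ρ volume x y := by
    intro x hx y hy
    refine (hρc.mono ?_).intervalIntegrable
    intro z hz
    exact lt_of_le_of_lt hz.2 (max_lt hx hy)
  set σ : ℝ → ℝ := fun t => ∫ r in (0:ℝ)..t, ρ r with hσ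
  have hd : ∀ t < 1, HasDerivAt σ (ρ t) t := by
    intro t ht
    exact intervalIntegral.integral_hasDerivAt_right (hintg 0 one_pos t ht)
      (hρc.stronglyMeasurableAtFilter isOpen_Iio t ht) (hρc.continuousAt (isOpen_Iio.mem_nhds ht))
  have hσs : ContDiffOn ℝ (⊤ : ℕ∞) σ (Set.Iio 1) := by
    rw [contDiffOn_infty_iff_deriv_of_isOpen isOpen_Iio]
    exact ⟨fun t ht => (hd t ht).differentiableAt.differentiableWithinAt,
      hρs.congr fun t ht => (hd t ht).deriv⟩
  have hmono : StrictMonoOn σ (Set.Iio 1) := by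
    refine strictMonoOn_of_deriv_pos (convex_Iio 1) hσs.continuousOn ?_
    intro x hx
    rw [interior_Iio] at hx
    rw [(hd x hx).deriv]
    exact hρpos x hx
  have hsub : Set.Ico (0:ℝ) 1 ⊆ Set.Iio 1 := fun x hx => hx.2
  have h0 : σ 0 = 0 := by simp [hσ]
  have hlog : ∀ t ∈ Set.Ico (0:ℝ) 1, -Real.log (1 - t) ≤ σ t := by
    intro t ht
    have hm : MonotoneOn (fun t => σ t - (-Real.log (1 - t))) (Set.Iio 1) := by
      have hdd : ∀ x < (1:ℝ), HasDerivAt (fun t => σ t - (-Real.log (1 - t)))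
          (ρ x - (1 - x)⁻¹) x := by
        intro x hx
        have h1 : HasDerivAt (fun t : ℝ => 1 - t) (-1) x := by
          simpa using (hasDerivAt_id x).const_sub 1
        have := (h1.log (by linarith)).neg
        rw [neg_div, neg_neg, one_div] at this
        exact (hd x hx).sub this
      refine monotoneOn_of_deriv_nonneg (convex_Iio 1)
        (fun x hx => (hdd x hx).continuousAt.continuousWithinAt)
        (fun x hx => (hdd x (by simpa using hx)).differentiableAt.differentiableWithinAt) ?_
      intro x hx
      have hx' : x < 1 := by simpa using hx
      rw [(hdd x hx').deriv]
      linarith [hρge x hx']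
    have := hm (show (0:ℝ) ∈ Set.Iio 1 by simp) ht.2 ht.1
    simp only [h0, sub_zero, Real.log_one, neg_zero] at this
    linarith
  refine ⟨σ, a, hσs.mono hsub, hmono.mono hsub, ⟨?_, (hmono.mono hsub).injOn, ?_⟩, ?_, ?_⟩
  · intro t ht
    have := hmono.monotoneOn (show (0:ℝ) ∈ Set.Iio 1 by simp) ht.2 ht.1
    rw [h0] at this
    exact this
  · intro y hy
    have hy0 : (0:ℝ) ≤ y := hy
    have hb0 : 0 ≤ 1 - rexp (-y) := by
      have := Real.exp_le_one_iff.2 (show -y ≤ 0 by linarith)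
      linarith
    have hb1 : 1 - rexp (-y) < 1 := by linarith [Real.exp_pos (-y)]
    have hc : ContinuousOn σ (Set.Icc 0 (1 - rexp (-y))) :=
      hσs.continuousOn.mono fun z hz => lt_of_le_of_lt hz.2 hb1
    have hl := hlog (1 - rexp (-y)) ⟨hb0, hb1⟩
    have : -Real.log (1 - (1 - rexp (-y))) = y := by
      rw [sub_sub_cancel, Real.log_exp, neg_neg]
    rw [this] at hl
    obtain ⟨z, hz, hz2⟩ := intermediate_value_Icc hb0 hc (show y ∈ Set.Icc _ _ from
      ⟨by rw [h0]; exact hy0, hl⟩)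
    exact ⟨z, ⟨hz.1, lt_of_le_of_lt hz.2 hb1⟩, hz2⟩
  · intro n
    exact ⟨le_max_left _ _, lt_of_lt_of_le (Real.exp_pos _) (le_max_right _ _)⟩
  · intro n t ht
    have hconst : ∀ r ∈ Set.Icc (1 - rexp (-((n:ℝ) + 1/4))) (1 - rexp (-(n + 3/4))),
        r < 1 ∧ ρ r = a n := by
      intro r hr
      have hp1 := Real.exp_pos (-((n:ℝ) + 3/4))
      have hr1 : r < 1 := by linarith [hr.2]
      refine ⟨hr1, hPa n _ ⟨?_, ?_⟩⟩
      · have h : Real.log (1 - r) ≤ -((n:ℝ) + 1/4) :=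
          (Real.log_le_iff_le_exp (by linarith)).2 (by linarith [hr.1])
        linarith
      · have h : -((n:ℝ) + 3/4) ≤ Real.log (1 - r) :=
          (Real.le_log_iff_exp_le (by linarith)).2 (by linarith [hr.2])
        linarith
    refine ⟨by rw [(hd t (hconst t ht).1).deriv, (hconst t ht).2], ?_⟩
    have hα : (1 - rexp (-((n:ℝ) + 1/4))) < 1 := by linarith [Real.exp_pos (-((n:ℝ) + 1/4))]
    have h1 : σ t - σ (1 - rexp (-((n:ℝ) + 1/4))) = ∫ r in (1 - rexp (-((n:ℝ) + 1/4)))..t, ρ r :=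
      intervalIntegral.integral_interval_sub_left (hintg _ one_pos _ (hconst t ht).1)
        (hintg _ one_pos _ hα)
    have h2 : ∫ r in (1 - rexp (-((n:ℝ) + 1/4)))..t, ρ r =
        ∫ r in (1 - rexp (-((n:ℝ) + 1/4)))..t, a n := by
      refine intervalIntegral.integral_congr fun r hr => ?_
      rw [Set.uIcc_of_le ht.1] at hr
      exact (hconst r ⟨hr.1, hr.2.trans ht.2⟩).2
    rw [h2, intervalIntegral.integral_const, smul_eq_mul] at h1
    linarith

end sigma
end part10

section part11
open Real MeasureTheory Filter
open scoped ContDiff Topology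

section assembly
variable {d : ℕ}

theorem pd_sub {f g : (Fin d → ℝ) → ℝ} (hf : Differentiable ℝ f) (hg : Differentiable ℝ g)
    (i : Fin d) (x : Fin d → ℝ) :
    pd d i (fun y => f y - g y) x = pd d i f x - pd d i g x := by
  simp only [pd]
  rw [fderiv_fun_sub (hf x) (hg x)]
  rfl

theorem lap_sub {f g : (Fin d → ℝ) → ℝ} (hf : ContDiff ℝ 2 f) (hg : ContDiff ℝ 2 g)
    (x : Fin d → ℝ) :
    lap d (fun y => f y - g y) x = lap d f x - lap d g x := by
  simp only [lap]
  rw [← Finset.sum_sub_distrib]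
  refine Finset.sum_congr rfl fun i _ => ?_
  have h1 : (fun y => pd d i (fun y => f y - g y) y) = fun y => pd d i f y - pd d i g y := by
    funext y
    exact pd_sub (hf.differentiable (by norm_num)) (hg.differentiable (by norm_num)) i y
  rw [h1]
  exact pd_sub ((hf.pd_one i).differentiable (by norm_num))
    ((hg.pd_one i).differentiable (by norm_num)) i x

/-- restriction of the equation to a smaller time set -/
theorem pde_restrict {I J : Set ℝ} (hJI : J ⊆ I) (hJ : UniqueDiffOn ℝ J)
    {κ : ℝ} {v : ℝ → (Fin d → ℝ) → (Fin d → ℝ)} {θ : ℝ → (Fin d → ℝ) → ℝ}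
    (hθ : ContDiffOn ℝ (⊤ : ℕ∞) (fun p : ℝ × (Fin d → ℝ) => θ p.1 p.2) (I ×ˢ Set.univ))
    (heq : ∀ t ∈ I, ∀ x, derivWithin (fun r => θ r x) I t - κ * lap d (θ t) x
          + ∑ i, v t x i * pd d i (θ t) x = 0) :
    ∀ t ∈ J, ∀ x, derivWithin (fun r => θ r x) J t - κ * lap d (θ t) x
          + ∑ i, v t x i * pd d i (θ t) x = 0 := by
  intro t ht x
  rw [derivWithin_subset hJI (hJ t ht) (slab_time (by simp) hθ (hJI ht) x).differentiableWithinAt]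
  exact heq t (hJI ht) x

theorem L2_eq_of_zero {f g : (Fin d → ℝ) → ℝ} (hf : Continuous f) (hg : Continuous g)
    (h : ∫ x in Set.Icc (0 : Fin d → ℝ) 1, (f x - g x) ^ 2 ≤ 0) : L2norm d f = L2norm d g := by
  have h0 : ∫ x in Set.Icc (0 : Fin d → ℝ) 1, (f x - g x) ^ 2 = 0 :=
    le_antisymm h (integral_nonneg fun x => sq_nonneg _)
  rw [integral_eq_zero_iff_of_nonneg (fun x => sq_nonneg _)
    (cell_integrable (f := fun x => (f x - g x) ^ 2) (by fun_prop))] at h0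
  unfold L2norm
  congr 1
  refine integral_congr_ae ?_
  filter_upwards [h0] with x hx
  have : f x - g x = 0 := by simpa using hx
  rw [sub_eq_zero.1 this]

theorem half_step {u : ℝ → (Fin d → ℝ) → (Fin d → ℝ)}
    (hu_smooth : ContDiffOn ℝ (⊤ : ℕ∞) (fun p : ℝ × (Fin d → ℝ) => u p.1 p.2)
      (Set.Ici (0:ℝ) ×ˢ Set.univ))
    (hu_per : ∀ t ∈ Set.Ici (0:ℝ), ∀ i : Fin d, PeriodicIn d (fun x => u t x i))
    (hu_div : ∀ t ∈ Set.Ici (0:ℝ), ∀ x, ∑ i, pd d i (fun y => u t y i) x = 0)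
    {κ s T : ℝ} (hκ : 0 < κ) (hs : 0 ≤ s) (hT : 0 < T)
    (hRE : ∀ θ : ℝ → (Fin d → ℝ) → ℝ,
      ContDiffOn ℝ (⊤ : ℕ∞) (fun p : ℝ × (Fin d → ℝ) => θ p.1 p.2) (Set.Ici s ×ˢ Set.univ) →
      (∀ t ∈ Set.Ici s, PeriodicIn d (θ t)) →
      (∀ t ∈ Set.Ici s, ∫ x in Set.Icc (0 : Fin d → ℝ) 1, θ t x = 0) →
      (∀ t ∈ Set.Ici s, ∀ x,
        derivWithin (fun r => θ r x) (Set.Ici s) t - κ * lap d (θ t) x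
          + ∑ i, u t x i * pd d i (θ t) x = 0) →
      L2norm d (θ (s + T)) ≤ (1/2) * L2norm d (θ s))
    {η : ℝ → (Fin d → ℝ) → ℝ}
    (hη : ContDiffOn ℝ (⊤ : ℕ∞) (fun p : ℝ × (Fin d → ℝ) => η p.1 p.2)
      (Set.Icc s (s + T) ×ˢ Set.univ))
    (hηper : ∀ t ∈ Set.Icc s (s + T), PeriodicIn d (η t))
    (hηmean : ∫ x in Set.Icc (0 : Fin d → ℝ) 1, η s x = 0)
    (hηeq : ∀ t ∈ Set.Icc s (s + T), ∀ x,
      derivWithin (fun r => η r x) (Set.Icc s (s + T)) t - κ * lap d (η t) x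
        + ∑ i, u t x i * pd d i (η t) x = 0) :
    L2norm d (η (s + T)) ≤ (1/2) * L2norm d (η s) := by
  have hsub : Set.Ici s ⊆ Set.Ici (0:ℝ) := Set.Ici_subset_Ici.2 hs
  have hJ : Set.Icc s (s + T) ⊆ Set.Ici s := fun x hx => hx.1
  have hJu : UniqueDiffOn ℝ (Set.Icc s (s + T)) := uniqueDiffOn_Icc (by linarith)
  have hsJ : s ∈ Set.Icc s (s + T) := ⟨le_rfl, by linarith⟩
  have heJ : s + T ∈ Set.Icc s (s + T) := ⟨by linarith, le_rfl⟩
  have hu1 : ∀ t ∈ Set.Ici s, ∀ i, ContDiff ℝ 1 (fun x => u t x i) := by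
    intro t ht i
    exact (contDiff_pi.1 (slab_space hu_smooth (hsub ht)) i).of_le (by norm_cast)
  obtain ⟨ζ, hζ, hζper, hζ0, hζeq⟩ := pde_exists hκ (hu_smooth.mono (Set.prod_mono hsub le_rfl))
    (fun t ht i => hu_per t (hsub ht) i) (slab_space hη hsJ) (hηper s hsJ)
  have hζ0' : ζ s = η s := funext hζ0
  have hζmean : ∀ t ∈ Set.Ici s, ∫ x in Set.Icc (0 : Fin d → ℝ) 1, ζ t x = 0 := by
    intro t ht
    rw [mean_const (convex_Ici s) isClosed_Ici (uniqueDiffOn_Ici s) u hu1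
      (fun t ht i => hu_per t (hsub ht) i) (fun t ht => hu_div t (hsub ht)) hζ hζper hζeq
      (Set.self_mem_Ici) ht, hζ0']
    exact hηmean
  have hhalf := hRE ζ hζ hζper hζmean hζeq
  have hζJ := hζ.mono (Set.prod_mono hJ (le_refl Set.univ))
  have hζeqJ := pde_restrict hJ hJu hζ hζeq
  have hanti := energy_antitone (convex_Icc s (s+T)) isClosed_Icc hJu hκ.le u
    (fun t ht => hu1 t (hJ ht)) (fun t ht i => hu_per t (hsub (hJ ht)) i)
    (fun t ht => hu_div t (hsub (hJ ht))) (θ := fun t x => η t x - ζ t x)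
    (hη.sub hζJ) (fun t ht x k => by
      show η t _ - ζ t _ = η t _ - ζ t _
      rw [hηper t ht x k, hζper t (hJ ht) x k]) (by
      intro t ht x
      have c1 : ContDiff ℝ 2 (η t) := (slab_space hη ht).of_le two_le_infty
      have c2 : ContDiff ℝ 2 (ζ t) := (slab_space hζJ ht).of_le two_le_infty
      rw [lap_sub c1 c2, derivWithin_fun_sub (slab_time (by simp) hη ht x).differentiableWithinAt
        (slab_time (by simp) hζJ ht x).differentiableWithinAt]
      simp only [pd_sub (c1.differentiable (by norm_num)) (c2.differentiable (by norm_num))]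
      simp only [mul_sub, Finset.sum_sub_distrib]
      linarith [hηeq t ht x, hζeqJ t ht x])
  have h := hanti hsJ heJ (by linarith)
  simp only [hζ0', sub_self] at h
  have h' := L2_eq_of_zero (slab_space hη heJ).continuous (slab_space hζJ heJ).continuous
    (h.trans (by simp))
  rw [h', ← hζ0']
  exact hhalf

/-- the step for the accelerated flow -/
theorem accel_step {u : ℝ → (Fin d → ℝ) → (Fin d → ℝ)}
    (hu_smooth : ContDiffOn ℝ (⊤ : ℕ∞) (fun p : ℝ × (Fin d → ℝ) => u p.1 p.2)
      (Set.Ici (0:ℝ) ×ˢ Set.univ))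
    (hu_per : ∀ t ∈ Set.Ici (0:ℝ), ∀ i : Fin d, PeriodicIn d (fun x => u t x i))
    (hu_div : ∀ t ∈ Set.Ici (0:ℝ), ∀ x, ∑ i, pd d i (fun y => u t y i) x = 0)
    {ν a T α β : ℝ} (hν : 0 < ν) (ha : 0 < a) (hT : 0 < T) (hTa : α + T / a ≤ β)
    {σ : ℝ → ℝ} (hσ0 : 0 ≤ σ α)
    (hσ : ∀ t ∈ Set.Icc α β, deriv σ t = a ∧ σ t = σ α + a * (t - α))
    (hRE : ∀ θ : ℝ → (Fin d → ℝ) → ℝ,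
      ContDiffOn ℝ (⊤ : ℕ∞) (fun p : ℝ × (Fin d → ℝ) => θ p.1 p.2) (Set.Ici (σ α) ×ˢ Set.univ) →
      (∀ t ∈ Set.Ici (σ α), PeriodicIn d (θ t)) →
      (∀ t ∈ Set.Ici (σ α), ∫ x in Set.Icc (0 : Fin d → ℝ) 1, θ t x = 0) →
      (∀ t ∈ Set.Ici (σ α), ∀ x,
        derivWithin (fun r => θ r x) (Set.Ici (σ α)) t - (ν / a) * lap d (θ t) x
          + ∑ i, u t x i * pd d i (θ t) x = 0) →
      L2norm d (θ (σ α + T)) ≤ (1/2) * L2norm d (θ (σ α)))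
    {I : Set ℝ} (hI : Set.Icc α β ⊆ I)
    {θ : ℝ → (Fin d → ℝ) → ℝ}
    (hθ : ContDiffOn ℝ (⊤ : ℕ∞) (fun p : ℝ × (Fin d → ℝ) => θ p.1 p.2) (I ×ˢ Set.univ))
    (hper : ∀ t ∈ I, PeriodicIn d (θ t))
    (hmean : ∀ t ∈ I, ∫ x in Set.Icc (0 : Fin d → ℝ) 1, θ t x = 0)
    (heq : ∀ t ∈ I, ∀ x, derivWithin (fun r => θ r x) I t - ν * lap d (θ t) x
            + ∑ i, (deriv σ t * u (σ t) x i) * pd d i (θ t) x = 0) :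
    L2norm d (θ (α + T / a)) ≤ (1/2) * L2norm d (θ α) := by
  set s := σ α with hs
  set φ : ℝ → ℝ := fun r => α + (r - s) / a with hφ
  have hmap : Set.MapsTo φ (Set.Icc s (s + T)) (Set.Icc α β) := by
    intro r hr
    constructor
    · have : 0 ≤ (r - s) / a := div_nonneg (by linarith [hr.1]) ha.le
      simp only [hφ]; linarith
    · have : (r - s) / a ≤ T / a := by gcongr; linarith [hr.2]
      simp only [hφ]; linarith
  have hφd : ∀ r, HasDerivAt φ (1 / a) r := by
    intro r
    exact (((hasDerivAt_id r).sub_const s).div_const a).const_add α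
  have hσφ : ∀ r ∈ Set.Icc s (s + T), σ (φ r) = r := by
    intro r hr
    rw [(hσ _ (hmap hr)).2]
    simp only [hφ]
    field_simp
    ring
  have e0 : φ s = α := by simp [hφ]
  have e1 : φ (s + T) = α + T / a := by simp [hφ]
  have hαI : α ∈ I := by
    rw [← e0]; exact hI (hmap ⟨le_rfl, by linarith⟩)
  have hfin := half_step hu_smooth hu_per hu_div (div_pos hν ha) hσ0 hT hRE
    (η := fun r x => θ (φ r) x) ?_ (fun t ht => hper _ (hI (hmap ht))) ?_ ?_
  · simp only [e0, e1] at hfin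
    exact hfin
  · have hc : ContDiff ℝ (⊤ : ℕ∞) (fun p : ℝ × (Fin d → ℝ) => (φ p.1, p.2)) := by
      simp only [hφ]; fun_prop
    exact hθ.comp hc.contDiffOn fun p hp => ⟨hI (hmap hp.1), Set.mem_univ _⟩
  · simp only [e0]; exact hmean α hαI
  · intro t ht x
    have hm : Set.MapsTo φ (Set.Icc s (s + T)) I := fun r hr => hI (hmap hr)
    have h1 := (slab_time (by simp) hθ (hm ht) x).differentiableWithinAt.hasDerivWithinAt
    have h2 : HasDerivWithinAt (fun r => θ (φ r) x) _ (Set.Icc s (s + T)) t :=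
      h1.comp t (hφd t).hasDerivWithinAt hm
    rw [h2.derivWithin (uniqueDiffOn_Icc (by linarith) t ht)]
    have h3 := heq (φ t) (hm ht) x
    rw [(hσ _ (hmap ht)).1, hσφ t ht] at h3
    have h4 : ∑ i, a * u t x i * pd d i (θ (φ t)) x = a * ∑ i, u t x i * pd d i (θ (φ t)) x := by
      rw [Finset.mul_sum]; exact Finset.sum_congr rfl fun i _ => by ring
    rw [h4] at h3
    field_simp
    have h5 : derivWithin (fun r => θ r x) I (φ t) = ν * lap d (θ (φ t)) x
      - a * ∑ i, u t x i * pd d i (θ (φ t)) x := by linarith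
    rw [h5]
    ring

/-- energy is decreasing for the accelerated flow -/
theorem accel_antitone {u : ℝ → (Fin d → ℝ) → (Fin d → ℝ)}
    (hu_smooth : ContDiffOn ℝ (⊤ : ℕ∞) (fun p : ℝ × (Fin d → ℝ) => u p.1 p.2)
      (Set.Ici (0:ℝ) ×ˢ Set.univ))
    (hu_per : ∀ t ∈ Set.Ici (0:ℝ), ∀ i : Fin d, PeriodicIn d (fun x => u t x i))
    (hu_div : ∀ t ∈ Set.Ici (0:ℝ), ∀ x, ∑ i, pd d i (fun y => u t y i) x = 0)
    {ν : ℝ} (hν : 0 < ν) {σ : ℝ → ℝ} {I : Set ℝ} (hI : Convex ℝ I) (hσ : ∀ t ∈ I, 0 ≤ σ t)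
    {θ : ℝ → (Fin d → ℝ) → ℝ}
    (hθ : ContDiffOn ℝ (⊤ : ℕ∞) (fun p : ℝ × (Fin d → ℝ) => θ p.1 p.2) (I ×ˢ Set.univ))
    (hper : ∀ t ∈ I, PeriodicIn d (θ t))
    (heq : ∀ t ∈ I, ∀ x, derivWithin (fun r => θ r x) I t - ν * lap d (θ t) x
            + ∑ i, (deriv σ t * u (σ t) x i) * pd d i (θ t) x = 0) :
    AntitoneOn (fun t => L2norm d (θ t)) I := by
  intro p hp q hq hpq
  rcases hpq.eq_or_lt with rfl | hlt
  · exact le_rfl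
  have hJ : Set.Icc p q ⊆ I := hI.ordConnected.out hp hq
  have hJu : UniqueDiffOn ℝ (Set.Icc p q) := uniqueDiffOn_Icc hlt
  have hu1 : ∀ t ∈ I, ∀ i, ContDiff ℝ 1 (fun x => u (σ t) x i) := by
    intro t ht i
    exact (contDiff_pi.1 (slab_space hu_smooth (hσ t ht)) i).of_le (by norm_cast)
  have := energy_antitone (convex_Icc p q) isClosed_Icc hJu hν.le
    (fun t x i => deriv σ t * u (σ t) x i)
    (fun t ht i => contDiff_const.mul (hu1 t (hJ ht) i))
    (fun t ht i x k => by
      show deriv σ t * _ = deriv σ t * _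
      congr 1
      exact hu_per _ (hσ t (hJ ht)) i x k)
    (fun t ht x => by
      have : ∀ i, pd d i (fun y => deriv σ t * u (σ t) y i) x =
          deriv σ t * pd d i (fun y => u (σ t) y i) x := by
        intro i
        simp only [pd]
        rw [fderiv_const_mul ((hu1 t (hJ ht) i).differentiable (by norm_num) x)]
        rfl
      simp only [this, ← Finset.mul_sum]
      rw [hu_div _ (hσ t (hJ ht)) x, mul_zero])
    (hθ.mono (Set.prod_mono hJ (le_refl Set.univ))) (fun t ht => hper t (hJ ht))
    (pde_restrict (v := fun t x i => deriv σ t * u (σ t) x i) hJ hJu hθ heq)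
  exact Real.sqrt_le_sqrt (this ⟨le_rfl, hpq⟩ ⟨hpq, le_rfl⟩ hpq)

end assembly
end part11


/-- Accelerated relaxation enhancing flows cause total dissipation. -/
theorem accelerated_relaxation_enhancing_total_dissipation
    (d : ℕ) (hd : 1 ≤ d)
    (u : ℝ → (Fin d → ℝ) → (Fin d → ℝ))
    (hu_smooth : ContDiffOn ℝ (⊤ : ℕ∞) (fun p : ℝ × (Fin d → ℝ) => u p.1 p.2)
      (Set.Ici (0:ℝ) ×ˢ Set.univ))
    (hu_per : ∀ t ∈ Set.Ici (0:ℝ), ∀ i : Fin d, PeriodicIn d (fun x => u t x i))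
    (hu_bdd : ∀ T > (0:ℝ), ∃ M : ℝ, ∀ t ∈ Set.Icc (0:ℝ) T, ∀ x, ‖u t x‖ ≤ M)
    (hu_div : ∀ t ∈ Set.Ici (0:ℝ), ∀ x, ∑ i, pd d i (fun y => u t y i) x = 0)
    (τ : ℝ → ℝ) (hτ_pos : ∀ ν > (0:ℝ), 0 < τ ν)
    (hτ_lim : Tendsto (fun ν => ν * τ ν) (nhdsWithin 0 (Set.Ioi 0)) (nhds 0))
    (hRE : ∀ ν > (0:ℝ), ∀ s ≥ (0:ℝ), ∀ θ : ℝ → (Fin d → ℝ) → ℝ,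
      ContDiffOn ℝ (⊤ : ℕ∞) (fun p : ℝ × (Fin d → ℝ) => θ p.1 p.2) (Set.Ici s ×ˢ Set.univ) →
      (∀ t ∈ Set.Ici s, PeriodicIn d (θ t)) →
      (∀ t ∈ Set.Ici s, ∫ x in Set.Icc (0 : Fin d → ℝ) 1, θ t x = 0) →
      (∀ t ∈ Set.Ici s, ∀ x,
        derivWithin (fun r => θ r x) (Set.Ici s) t - ν * lap d (θ t) x
          + ∑ i, u t x i * pd d i (θ t) x = 0) →
      L2norm d (θ (s + τ ν)) ≤ (1/2) * L2norm d (θ s)) :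
    ∃ σ : ℝ → ℝ,
      ContDiffOn ℝ (⊤ : ℕ∞) σ (Set.Ico 0 1) ∧
      StrictMonoOn σ (Set.Ico 0 1) ∧
      Set.BijOn σ (Set.Ico 0 1) (Set.Ici 0) ∧
      ∀ ν > (0:ℝ), ∀ s ∈ Set.Ico (0:ℝ) 1, ∀ θ : ℝ → (Fin d → ℝ) → ℝ,
        ContDiffOn ℝ (⊤ : ℕ∞) (fun p : ℝ × (Fin d → ℝ) => θ p.1 p.2) (Set.Ico s 1 ×ˢ Set.univ) →
        (∀ t ∈ Set.Ico s 1, PeriodicIn d (θ t)) →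
        (∀ t ∈ Set.Ico s 1, ∫ x in Set.Icc (0 : Fin d → ℝ) 1, θ t x = 0) →
        (∀ t ∈ Set.Ico s 1, ∀ x,
          derivWithin (fun r => θ r x) (Set.Ico s 1) t - ν * lap d (θ t) x
            + ∑ i, (deriv σ t * u (σ t) x i) * pd d i (θ t) x = 0) →
        Tendsto (fun t => L2norm d (θ t)) (nhdsWithin 1 (Set.Iio 1)) (nhds 0) := by
  set h : ℕ → ℝ := fun n => rexp (-((n:ℝ) + 1/4)) - rexp (-((n:ℝ) + 3/4)) with hh
  have hpos : ∀ n, 0 < h n := fun n => sub_pos.2 (Real.exp_lt_exp.2 (by linarith))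
  have hδ : ∀ n : ℕ, ∃ δ > (0:ℝ), ∀ κ, 0 < κ → κ < δ → κ * τ κ ≤ h n / (n + 1) := by
    intro n
    have hp : 0 < h n / ((n:ℝ) + 1) := div_pos (hpos n) (by positivity)
    have h1 := hτ_lim.eventually (Iio_mem_nhds hp)
    rw [eventually_nhdsWithin_iff, Metric.eventually_nhds_iff] at h1
    obtain ⟨δ, hδ, h2⟩ := h1
    refine ⟨δ, hδ, fun κ hκ hκδ => le_of_lt (h2 ?_ hκ)⟩
    rw [Real.dist_eq, sub_zero, abs_of_pos hκ]
    exact hκδ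
  choose δ hδpos hδ using hδ
  obtain ⟨σ, a, hσs, hσm, hσb, ha, hσa⟩ := sigma_exists (fun n => (n + 1) / δ n + 1)
  refine ⟨σ, hσs, hσm, hσb, ?_⟩
  intro ν hν s hs θ hθ hper hmean heq
  have hsub : Set.Ico s 1 ⊆ Set.Ico (0:ℝ) 1 := fun t ht => ⟨hs.1.trans ht.1, ht.2⟩
  have hanti := accel_antitone hu_smooth hu_per hu_div hν (convex_Ico s 1)
    (fun t ht => hσb.mapsTo (hsub ht)) hθ hper heq
  set α : ℕ → ℝ := fun n => 1 - rexp (-((n:ℝ) + 1/4)) with hα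
  set β : ℕ → ℝ := fun n => 1 - rexp (-((n:ℝ) + 3/4)) with hβ
  obtain ⟨n0, hn0⟩ := exists_nat_ge (max (-Real.log (1 - s)) (max ν (1 / ν)))
  have hαmem : ∀ n, n0 ≤ n → s < α n ∧ α n < 1 ∧ α n < β n ∧ β n < 1 ∧ β n < α (n + 1) := by
    intro n hn
    have hn' : (n0 : ℝ) ≤ n := by exact_mod_cast hn
    have h1 : -Real.log (1 - s) ≤ n := ((le_max_left _ _).trans hn0).trans hn'
    have h2 : rexp (-((n:ℝ) + 1/4)) < 1 - s := by
      rw [← Real.lt_log_iff_exp_lt (by linarith [hs.2])]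
      linarith
    have h3 := Real.exp_pos (-((n:ℝ) + 1/4))
    have h4 := Real.exp_pos (-((n:ℝ) + 3/4))
    have h5 := hpos n
    have h6 : rexp (-(((n + 1 : ℕ):ℝ) + 1/4)) < rexp (-((n:ℝ) + 3/4)) := by
      refine Real.exp_lt_exp.2 ?_
      push_cast
      linarith
    simp only [hα, hβ, hh] at *
    refine ⟨by linarith, by linarith, by linarith, by linarith, by linarith⟩
  have hstep : ∀ n, n0 ≤ n → L2norm d (θ (α (n + 1))) ≤ (1/2) * L2norm d (θ (α n)) := by
    intro n hn
    have hn' : (n0 : ℝ) ≤ n := by exact_mod_cast hn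
    obtain ⟨m1, m2, m3, m4, m5⟩ := hαmem n hn
    obtain ⟨-, m6, -, -, -⟩ := hαmem (n + 1) (by omega)
    have hν1 : ν ≤ n := ((le_max_left _ _).trans ((le_max_right _ _).trans hn0)).trans hn'
    have hν2 : 1 / ν ≤ n := ((le_max_right _ _).trans ((le_max_right _ _).trans hn0)).trans hn'
    have hapos := (ha n).2
    have hκ : 0 < ν / a n := div_pos hν hapos
    have hκδ : ν / a n < δ n := by
      rw [div_lt_iff₀ hapos]
      have h1 : ((n:ℝ) + 1) / δ n < a n := by linarith [(ha n).1]
      rw [div_lt_iff₀ (hδpos n)] at h1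
      linarith
    have hκτ := hδ n _ hκ hκδ
    have hT := hτ_pos _ hκ
    have hTa : τ (ν / a n) / a n ≤ h n := by
      have h1 : 1 ≤ ν * (n + 1) := by
        rw [div_le_iff₀ hν] at hν2
        nlinarith
      have hTa0 : 0 < τ (ν / a n) / a n := div_pos hT hapos
      rw [le_div_iff₀ (by positivity)] at hκτ
      calc τ (ν / a n) / a n ≤ (ν * (n + 1)) * (τ (ν / a n) / a n) :=
            le_mul_of_one_le_left hTa0.le h1
        _ = ν / a n * τ (ν / a n) * (n + 1) := by ring
        _ ≤ h n := hκτ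
    have hTb : α n + τ (ν / a n) / a n ≤ β n := by
      simp only [hα, hβ, hh] at *
      linarith
    have hI : Set.Icc (α n) (β n) ⊆ Set.Ico s 1 :=
      fun t ht => ⟨m1.le.trans ht.1, lt_of_le_of_lt ht.2 m4⟩
    have hσ0 : 0 ≤ σ (α n) := hσb.mapsTo (hsub ⟨m1.le, m2⟩)
    have hkey := accel_step hu_smooth hu_per hu_div hν hapos hT hTb hσ0 (hσa n)
      (hRE _ hκ _ hσ0) hI hθ hper hmean heq
    have hTa0 : 0 < τ (ν / a n) / a n := div_pos hT hapos
    exact (hanti ⟨by linarith, by linarith⟩ ⟨by linarith, m6⟩ (by linarith)).trans hkey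
  have hgeo : ∀ k : ℕ, L2norm d (θ (α (n0 + k))) ≤ (1/2) ^ k * L2norm d (θ (α n0)) := by
    intro k
    induction k with
    | zero => simp
    | succ k ih =>
      have := hstep (n0 + k) (by omega)
      rw [← add_assoc, pow_succ]
      linarith
  have hlim : Tendsto (fun k : ℕ => ((1:ℝ)/2) ^ k * L2norm d (θ (α n0))) atTop (nhds 0) := by
    have := (tendsto_pow_atTop_nhds_zero_of_lt_one (r := (1:ℝ)/2) (by norm_num)
      (by norm_num)).mul_const (L2norm d (θ (α n0)))
    rwa [zero_mul] at this
  rw [Metric.tendsto_nhds]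
  intro ε hε
  obtain ⟨k, hk⟩ := (hlim.eventually (Iio_mem_nhds hε)).exists
  obtain ⟨m1, m2, -, -, -⟩ := hαmem (n0 + k) (by omega)
  filter_upwards [Ioo_mem_nhdsLT m2] with t ht
  have h1 : L2norm d (θ t) ≤ L2norm d (θ (α (n0 + k))) :=
    hanti ⟨m1.le, m2⟩ ⟨by linarith [ht.1], ht.2⟩ ht.1.le
  have h2 : 0 ≤ L2norm d (θ t) := Real.sqrt_nonneg _
  rw [Real.dist_eq, sub_zero, abs_of_nonneg h2]
  exact lt_of_le_of_lt (h1.trans (hgeo k)) hk
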